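/- Let (t_k) be a sequence of positive reals with t_k → 0, and for each k let (x^k,y^k) be a nondegenerate Karush–Kuhn–Tucker point of the Scholtes-type regularization S(t_k), all with the same quadratic index m. Suppose (x^k,y^k) → (x̄,ȳ), where (x̄,ȳ) is a nondegenerate T-stationary point of the regularized continuous reformulation R with (unique) multipliers (λ̄,μ̄,σ̄,ϱ̄) and T-index TI. Then max{ m − |{i ∈ a01(x̄,ȳ) : σ̄_{1,i} = 0}| , 0 } ≤ TI ≤ m. -/

import Mathlib

open scoped Classical
open Finset Filter Topology

noncomputable section
namespace Scholtes

/-- Vectors in ℝⁿ. -/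
abbrev Vec (n : ℕ) := Fin n → ℝ

variable {n : ℕ} {P Q : Type*} [Fintype P] [Fintype Q]

/-- Euclidean dot product. -/
def dot (u v : Vec n) : ℝ := ∑ i, u i * v i

/-- Gradient: vector of partial derivatives. -/
def grad (f : Vec n → ℝ) (x : Vec n) : Vec n := fun i => fderiv ℝ f x (Pi.single i 1)

/-- Hessian bilinear form of `L` at `z`, evaluated at directions `ξ`, `ζ`. -/
def hess (L : Vec n × Vec n → ℝ) (z ξ ζ : Vec n × Vec n) : ℝ :=
  fderiv ℝ (fun w => fderiv ℝ L w ξ) z ζ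

/-- The pair vector (e_i, 0) ∈ ℝ²ⁿ. -/
def ex (i : Fin n) : Vec n × Vec n := (Pi.single i 1, 0)

/-- The pair vector (0, e_i) ∈ ℝ²ⁿ. -/
def ey (i : Fin n) : Vec n × Vec n := (0, Pi.single i 1)

/-- The pair vector (0, e) ∈ ℝ²ⁿ, where e is the all-ones vector. -/
def eAll : Vec n × Vec n := (0, fun _ => 1)

/-- The pair vector (y_i e_i, x_i e_i) ∈ ℝ²ⁿ. -/
def hvec (x y : Vec n) (i : Fin n) : Vec n × Vec n := (Pi.single i (y i), Pi.single i (x i))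

/-- The number of negative eigenvalues of the bilinear form `B` restricted to the
(sub)space `T`, expressed as the maximal dimension of a linear subspace of `T` on
which the associated quadratic form is negative definite. -/
def negIndex (B : (Vec n × Vec n) → (Vec n × Vec n) → ℝ) (T : (Vec n × Vec n) → Prop) : ℕ :=
  sSup {d : ℕ | ∃ W : Submodule ℝ (Vec n × Vec n),
    (∀ ξ ∈ W, T ξ) ∧ Module.finrank ℝ W = d ∧ ∀ ξ ∈ W, ξ ≠ 0 → B ξ ξ < 0}

/-- The data and standing assumptions of the paper: objective `f`, equality
constraints `h`, inequality constraints `g`, positive pairwise different linear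
coefficients `c`, cardinality bound `s` and regularization parameter `ε`. -/
structure Setting (n : ℕ) (P Q : Type*) [Fintype P] [Fintype Q] where
  f : Vec n → ℝ
  h : P → Vec n → ℝ
  g : Q → Vec n → ℝ
  c : Vec n
  s : ℕ
  ε : ℝ
  hn : 1 ≤ n
  hf : ContDiff ℝ 2 f
  hh : ∀ p, ContDiff ℝ 2 (h p)
  hg : ∀ q, ContDiff ℝ 2 (g q)
  hcpos : ∀ i, 0 < c i
  hcinj : Function.Injective c
  hs : s < n
  hεpos : 0 < ε
  hεle : ε ≤ 1 / ((n : ℝ) - s)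

/-- Index set a01: x̄_i = 0, ȳ_i > 0. -/
def a01 (x y : Vec n) : Finset (Fin n) := univ.filter fun i => x i = 0 ∧ 0 < y i

/-- Index set a10: x̄_i ≠ 0, ȳ_i = 0. -/
def a10 (x y : Vec n) : Finset (Fin n) := univ.filter fun i => x i ≠ 0 ∧ y i = 0

/-- Index set a00: x̄_i = 0, ȳ_i = 0. -/
def a00 (x y : Vec n) : Finset (Fin n) := univ.filter fun i => x i = 0 ∧ y i = 0

/-- Index set N(y): y_i = 0. -/
def Nact (y : Vec n) : Finset (Fin n) := univ.filter fun i => y i = 0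

/-- Index set H≥(x,y): x_i y_i = −t. -/
def Hge (t : ℝ) (x y : Vec n) : Finset (Fin n) := univ.filter fun i => x i * y i = -t

/-- Index set H≤(x,y): x_i y_i = t. -/
def Hle (t : ℝ) (x y : Vec n) : Finset (Fin n) := univ.filter fun i => x i * y i = t

/-- Index set H(x,y) = H≥ ∪ H≤. -/
def Hact (t : ℝ) (x y : Vec n) : Finset (Fin n) := Hge t x y ∪ Hle t x y

/-- Active inequality constraints Q0(x). -/
def Q0 (D : Setting n P Q) (x : Vec n) : Finset Q := univ.filter fun q => D.g q x = 0

/-- Active upper bounds E(y): y_i = 1 + ε. -/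
def Eact (D : Setting n P Q) (y : Vec n) : Finset (Fin n) := univ.filter fun i => y i = 1 + D.ε

/-- Index set O(x,y) = complement of E(y) ∪ N(y) ∪ H(x,y). -/
def Oact (D : Setting n P Q) (t : ℝ) (x y : Vec n) : Finset (Fin n) :=
  (Eact D y ∪ Nact y ∪ Hact t x y)ᶜ

/-- Feasibility for the regularized continuous reformulation R. -/
def feasR (D : Setting n P Q) (x y : Vec n) : Prop :=
  (∀ p, D.h p x = 0) ∧ (∀ q, 0 ≤ D.g q x) ∧ ((n : ℝ) - D.s ≤ ∑ i, y i) ∧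
  (∀ i, x i * y i = 0) ∧ (∀ i, 0 ≤ y i ∧ y i ≤ 1 + D.ε)

/-- Feasibility for the Scholtes-type regularization S(t). -/
def feasS (D : Setting n P Q) (t : ℝ) (x y : Vec n) : Prop :=
  (∀ p, D.h p x = 0) ∧ (∀ q, 0 ≤ D.g q x) ∧ ((n : ℝ) - D.s ≤ ∑ i, y i) ∧
  (∀ i, -t ≤ x i * y i ∧ x i * y i ≤ t) ∧ (∀ i, 0 ≤ y i ∧ y i ≤ 1 + D.ε)

/-- Multipliers for T-stationarity (defined on the whole index ranges). -/
structure TMult (n : ℕ) (P Q : Type*) where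
  lam : P → ℝ
  mu1 : Q → ℝ
  mu2 : Fin n → ℝ
  mu3 : ℝ
  sig1 : Fin n → ℝ
  sig2 : Fin n → ℝ
  rho1 : Fin n → ℝ
  rho2 : Fin n → ℝ

/-- The T-stationarity equation (1) of Definition 2. -/
def TStatEq (D : Setting n P Q) (x y : Vec n) (M : TMult n P Q) : Prop :=
  ((grad D.f x, D.c) : Vec n × Vec n) =
    (∑ p, M.lam p • ((grad (D.h p) x, (0 : Vec n)) : Vec n × Vec n))
    + (∑ q ∈ Q0 D x, M.mu1 q • ((grad (D.g q) x, (0 : Vec n)) : Vec n × Vec n))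
    - (∑ i ∈ Eact D y, M.mu2 i • ey i)
    + M.mu3 • eAll
    + (∑ i ∈ a01 x y, M.sig1 i • ex i)
    + (∑ i ∈ a10 x y, M.sig2 i • ey i)
    + (∑ i ∈ a00 x y, (M.rho1 i • ex i + M.rho2 i • ey i))

/-- (x,y) is a T-stationary point of R with multipliers M. -/
def TStatAt (D : Setting n P Q) (x y : Vec n) (M : TMult n P Q) : Prop :=
  feasR D x y ∧
  (∀ q ∈ Q0 D x, 0 ≤ M.mu1 q) ∧
  (∀ i ∈ Eact D y, 0 ≤ M.mu2 i) ∧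
  0 ≤ M.mu3 ∧
  M.mu3 * ((∑ i, y i) - ((n : ℝ) - D.s)) = 0 ∧
  (∀ i ∈ a00 x y, M.rho1 i = 0 ∨ M.rho2 i ≤ 0) ∧
  TStatEq D x y M

/-- (x,y) is a T-stationary point of R. -/
def TStat (D : Setting n P Q) (x y : Vec n) : Prop := ∃ M, TStatAt D x y M

/-- MPOC-tailored LICQ at a feasible point (x,y) of R: the indicated family of
vectors in ℝ²ⁿ is linearly independent. -/
def MPOC_LICQ (D : Setting n P Q) (x y : Vec n) : Prop :=
  ∀ (lam : P → ℝ) (mu1 : Q → ℝ) (mu2 : Fin n → ℝ) (mu3 : ℝ) (s1 s2 : Fin n → ℝ),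
    ((∑ i, y i) ≠ (n : ℝ) - D.s → mu3 = 0) →
    (∑ p, lam p • ((grad (D.h p) x, (0 : Vec n)) : Vec n × Vec n))
    + (∑ q ∈ Q0 D x, mu1 q • ((grad (D.g q) x, (0 : Vec n)) : Vec n × Vec n))
    + (∑ i ∈ Eact D y, mu2 i • ey i)
    + mu3 • eAll
    + (∑ i ∈ a01 x y ∪ a00 x y, s1 i • ex i)
    + (∑ i ∈ a10 x y ∪ a00 x y, s2 i • ey i) = 0 →
    (∀ p, lam p = 0) ∧ (∀ q ∈ Q0 D x, mu1 q = 0) ∧ (∀ i ∈ Eact D y, mu2 i = 0) ∧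
    mu3 = 0 ∧ (∀ i ∈ a01 x y ∪ a00 x y, s1 i = 0) ∧ (∀ i ∈ a10 x y ∪ a00 x y, s2 i = 0)

/-- The Lagrange function L^R associated with the T-stationary point (x̄,ȳ)
and multipliers M. -/
def LagR (D : Setting n P Q) (xb yb : Vec n) (M : TMult n P Q) (z : Vec n × Vec n) : ℝ :=
  D.f z.1 + dot D.c z.2
    - (∑ p, M.lam p * D.h p z.1)
    - (∑ q ∈ Q0 D xb, M.mu1 q * D.g q z.1)
    + (∑ i ∈ Eact D yb, M.mu2 i * (z.2 i - (1 + D.ε)))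
    - M.mu3 * ((∑ i, z.2 i) - ((n : ℝ) - D.s))
    - (∑ i ∈ a01 xb yb, M.sig1 i * z.1 i)
    - (∑ i ∈ a10 xb yb, M.sig2 i * z.2 i)
    - (∑ i ∈ a00 xb yb, (M.rho1 i * z.1 i + M.rho2 i * z.2 i))

/-- Membership in the tangent space T^R at (x̄,ȳ). -/
def inTR (D : Setting n P Q) (x y : Vec n) (ξ : Vec n × Vec n) : Prop :=
  (∀ p, dot (grad (D.h p) x) ξ.1 = 0) ∧
  (∀ q ∈ Q0 D x, dot (grad (D.g q) x) ξ.1 = 0) ∧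
  (∀ i ∈ Eact D y, ξ.2 i = 0) ∧
  ((∑ i, y i) = (n : ℝ) - D.s → (∑ i, ξ.2 i) = 0) ∧
  (∀ i ∈ a00 x y ∪ a01 x y, ξ.1 i = 0) ∧
  (∀ i ∈ a00 x y ∪ a10 x y, ξ.2 i = 0)

/-- Nondegenerate T-stationary point with multipliers M (NDT1–NDT4). -/
def NondegTStatAt (D : Setting n P Q) (x y : Vec n) (M : TMult n P Q) : Prop :=
  TStatAt D x y M ∧
  MPOC_LICQ D x y ∧
  (∀ q ∈ Q0 D x, 0 < M.mu1 q) ∧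
  (∀ i ∈ Eact D y, 0 < M.mu2 i) ∧
  ((∑ i, y i) = (n : ℝ) - D.s → 0 < M.mu3) ∧
  (∀ i ∈ a00 x y, M.rho1 i ≠ 0 ∧ M.rho2 i < 0) ∧
  (∀ ξ, inTR D x y ξ → (∀ ζ, inTR D x y ζ → hess (LagR D x y M) (x, y) ξ ζ = 0) → ξ = 0)

/-- T-index: quadratic index (number of negative eigenvalues of the restricted
Hessian of L^R) plus the biactive index |a00|. -/
def TIndex (D : Setting n P Q) (x y : Vec n) (M : TMult n P Q) : ℕ :=
  negIndex (hess (LagR D x y M) (x, y)) (inTR D x y) + (a00 x y).card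

/-- Multipliers for KKT points of S(t) (defined on the whole index ranges). -/
structure SMult (n : ℕ) (P Q : Type*) where
  lam : P → ℝ
  mu1 : Q → ℝ
  mu2 : Fin n → ℝ
  mu3 : ℝ
  etaGe : Fin n → ℝ
  etaLe : Fin n → ℝ
  nu : Fin n → ℝ

/-- The KKT equation for S(t). -/
def KKTEq (D : Setting n P Q) (t : ℝ) (x y : Vec n) (M : SMult n P Q) : Prop :=
  ((grad D.f x, D.c) : Vec n × Vec n) =
    (∑ p, M.lam p • ((grad (D.h p) x, (0 : Vec n)) : Vec n × Vec n))
    + (∑ q ∈ Q0 D x, M.mu1 q • ((grad (D.g q) x, (0 : Vec n)) : Vec n × Vec n))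
    - (∑ i ∈ Eact D y, M.mu2 i • ey i)
    + M.mu3 • eAll
    + (∑ i ∈ Hge t x y, M.etaGe i • hvec x y i)
    - (∑ i ∈ Hle t x y, M.etaLe i • hvec x y i)
    + (∑ i ∈ Nact y, M.nu i • ey i)

/-- (x,y) is a KKT point of S(t) with multipliers M. -/
def KKTAt (D : Setting n P Q) (t : ℝ) (x y : Vec n) (M : SMult n P Q) : Prop :=
  feasS D t x y ∧
  (∀ q ∈ Q0 D x, 0 ≤ M.mu1 q) ∧
  (∀ i ∈ Eact D y, 0 ≤ M.mu2 i) ∧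
  0 ≤ M.mu3 ∧
  M.mu3 * ((∑ i, y i) - ((n : ℝ) - D.s)) = 0 ∧
  (∀ i ∈ Hge t x y, 0 ≤ M.etaGe i) ∧
  (∀ i ∈ Hle t x y, 0 ≤ M.etaLe i) ∧
  (∀ i ∈ Nact y, 0 ≤ M.nu i) ∧
  KKTEq D t x y M

/-- (x,y) is a KKT point of S(t). -/
def KKT (D : Setting n P Q) (t : ℝ) (x y : Vec n) : Prop := ∃ M, KKTAt D t x y M

/-- LICQ at a feasible point (x,y) of S(t). -/
def LICQ (D : Setting n P Q) (t : ℝ) (x y : Vec n) : Prop :=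
  ∀ (lam : P → ℝ) (mu1 : Q → ℝ) (mu2 : Fin n → ℝ) (mu3 : ℝ) (eta nu : Fin n → ℝ),
    ((∑ i, y i) ≠ (n : ℝ) - D.s → mu3 = 0) →
    (∑ p, lam p • ((grad (D.h p) x, (0 : Vec n)) : Vec n × Vec n))
    + (∑ q ∈ Q0 D x, mu1 q • ((grad (D.g q) x, (0 : Vec n)) : Vec n × Vec n))
    + (∑ i ∈ Eact D y, mu2 i • ey i)
    + mu3 • eAll
    + (∑ i ∈ Hact t x y, eta i • hvec x y i)
    + (∑ i ∈ Nact y, nu i • ey i) = 0 →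
    (∀ p, lam p = 0) ∧ (∀ q ∈ Q0 D x, mu1 q = 0) ∧ (∀ i ∈ Eact D y, mu2 i = 0) ∧
    mu3 = 0 ∧ (∀ i ∈ Hact t x y, eta i = 0) ∧ (∀ i ∈ Nact y, nu i = 0)

/-- The Lagrange function L^S associated with the KKT point (x̄,ȳ) of S(t)
and multipliers M. -/
def LagS (D : Setting n P Q) (t : ℝ) (xb yb : Vec n) (M : SMult n P Q)
    (z : Vec n × Vec n) : ℝ :=
  D.f z.1 + dot D.c z.2
    - (∑ p, M.lam p * D.h p z.1)
    - (∑ q ∈ Q0 D xb, M.mu1 q * D.g q z.1)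
    + (∑ i ∈ Eact D yb, M.mu2 i * (z.2 i - (1 + D.ε)))
    - M.mu3 * ((∑ i, z.2 i) - ((n : ℝ) - D.s))
    - (∑ i ∈ Hge t xb yb, M.etaGe i * (z.1 i * z.2 i + t))
    + (∑ i ∈ Hle t xb yb, M.etaLe i * (z.1 i * z.2 i - t))
    - (∑ i ∈ Nact yb, M.nu i * z.2 i)

/-- Membership in the tangent space T^S at (x,y) for S(t). -/
def inTS (D : Setting n P Q) (t : ℝ) (x y : Vec n) (ξ : Vec n × Vec n) : Prop :=
  (∀ p, dot (grad (D.h p) x) ξ.1 = 0) ∧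
  (∀ q ∈ Q0 D x, dot (grad (D.g q) x) ξ.1 = 0) ∧
  (∀ i ∈ Eact D y, ξ.2 i = 0) ∧
  ((∑ i, y i) = (n : ℝ) - D.s → (∑ i, ξ.2 i) = 0) ∧
  (∀ i ∈ Hact t x y, y i * ξ.1 i + x i * ξ.2 i = 0) ∧
  (∀ i ∈ Nact y, ξ.2 i = 0)

/-- Nondegenerate KKT point of S(t) with multipliers M (ND1–ND3). -/
def NondegKKTAt (D : Setting n P Q) (t : ℝ) (x y : Vec n) (M : SMult n P Q) : Prop :=
  KKTAt D t x y M ∧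
  LICQ D t x y ∧
  (∀ q ∈ Q0 D x, 0 < M.mu1 q) ∧
  (∀ i ∈ Eact D y, 0 < M.mu2 i) ∧
  (∀ i ∈ Hge t x y, 0 < M.etaGe i) ∧
  (∀ i ∈ Hle t x y, 0 < M.etaLe i) ∧
  (∀ i ∈ Nact y, 0 < M.nu i) ∧
  ((∑ i, y i) = (n : ℝ) - D.s → 0 < M.mu3) ∧
  (∀ ξ, inTS D t x y ξ → (∀ ζ, inTS D t x y ζ → hess (LagS D t x y M) (x, y) ξ ζ = 0) → ξ = 0)

/-- Quadratic index of a KKT point of S(t): number of negative eigenvalues of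
the restricted Hessian of L^S. -/
def QIdx (D : Setting n P Q) (t : ℝ) (x y : Vec n) (M : SMult n P Q) : ℕ :=
  negIndex (hess (LagS D t x y M) (x, y)) (inTS D t x y)

/-!
Near a nondegenerate T-stationary point every constraint gradient `(y i • e_i, x i • e_i)` of S(t)
is a multiple of a small perturbation of a coordinate vector occurring in MPOC-LICQ. The multipliers
of the KKT points therefore converge to those of the limit, and strict complementarity stabilises
the active sets. Consequently a limit of tangent directions of S(t) on which the Hessian of L^S has
a sign is tangent to R and the Hessian of L^R has the same sign on it, up to two effects. At an
index `i ∈ a01` with `sig1 i = 0` the constraint `-t ≤ x i * y i ≤ t` may be inactive, which frees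
the direction `e_i` in `x`. At a biactive index the sign of `rho2` together with the growth of the
multiplier of `x i * y i` produces exactly one additional negative direction. Comparing dimensions
gives both bounds.
-/

section Subspaces

open Module

variable {K M : Type*} [DivisionRing K] [AddCommGroup M] [Module K M] [FiniteDimensional K M]

lemma exists_inf_eq_and_finrank_add {V T : Submodule K M} (hV : V ≤ T) :
    ∃ F : Submodule K M, F ⊓ T = V ∧ finrank K F + finrank K T = finrank K M + finrank K V := by
  obtain ⟨C, hC⟩ := T.exists_isCompl
  have hinf : (V ⊔ C) ⊓ T = V := by
    rw [sup_inf_assoc_of_le C hV, inf_comm, hC.inf_eq_bot, sup_bot_eq]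
  have hsup : (V ⊔ C) ⊔ T = ⊤ := by
    rw [sup_assoc, sup_comm C, hC.sup_eq_top, sup_top_eq]
  refine ⟨V ⊔ C, hinf, ?_⟩
  rw [← Submodule.finrank_sup_add_finrank_inf_eq, hinf, hsup, finrank_top]

lemma finrank_add_le_finrank_add_finrank_inf {U V W : Submodule K M} (hU : U ≤ W) (hV : V ≤ W) :
    finrank K U + finrank K V ≤ finrank K W + finrank K (U ⊓ V : Submodule K M) := by
  rw [← Submodule.finrank_sup_add_finrank_inf_eq]
  gcongr
  exact Submodule.finrank_mono (sup_le hU hV)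

end Subspaces

section Signature

open Module

lemma exists_norm_eq_one_mem_mem {E : Type*} [NormedAddCommGroup E] [NormedSpace ℝ E]
    [FiniteDimensional ℝ E] {U V : Submodule ℝ E}
    (h : finrank ℝ E < finrank ℝ U + finrank ℝ V) : ∃ ξ, ‖ξ‖ = 1 ∧ ξ ∈ U ∧ ξ ∈ V := by
  have hne : U ⊓ V ≠ ⊥ := fun hbot =>
    h.not_ge (Submodule.finrank_add_finrank_le_of_disjoint (disjoint_iff.mpr hbot))
  obtain ⟨ξ, hξ, hξ0⟩ := Submodule.exists_mem_ne_zero_of_ne_bot hne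
  exact ⟨‖ξ‖⁻¹ • ξ, norm_smul_inv_norm hξ0, U.smul_mem _ hξ.1, V.smul_mem _ hξ.2⟩

/-- A semicontinuous form of `QuadraticForm.sigPos_add_finrank_le_of_nonpos`. -/
lemma eventually_finrank_add_sigPos_le {E κ : Type*} [NormedAddCommGroup E] [NormedSpace ℝ E]
    [FiniteDimensional ℝ E] (l : Ultrafilter κ) (V : κ → Submodule ℝ E) (T : Submodule ℝ E)
    (q : QuadraticForm ℝ E)
    (hlim : ∀ (ξ : κ → E) (ξ₀ : E), (∀ᶠ k in l, ξ k ∈ V k) → Tendsto ξ l (𝓝 ξ₀) →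
      ξ₀ ∈ T ∧ q ξ₀ ≤ 0) :
    ∀ᶠ k in l, finrank ℝ (V k) + sigPos (q.restrict T) ≤ finrank ℝ T := by
  by_contra hnot
  obtain ⟨U, hUrank, hUpos⟩ := exists_finrank_eq_sigPos_and_posDef (q.restrict T)
  obtain ⟨F, hFT, hFrank⟩ := exists_inf_eq_and_finrank_add (T.map_subtype_le U)
  rw [Submodule.finrank_map_subtype_eq] at hFrank
  have hunit : ∀ᶠ k in l, ∃ ξ, ‖ξ‖ = 1 ∧ ξ ∈ V k ∧ ξ ∈ F := by
    filter_upwards [Ultrafilter.eventually_not.mpr hnot] with k hk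
    exact exists_norm_eq_one_mem_mem (by omega)
  obtain ⟨ξ, hξ⟩ := hunit.choice
  obtain ⟨ξ₀, hξ₀, hconv⟩ := (isCompact_sphere (0 : E) 1).ultrafilter_le_nhds (l.map ξ)
    (le_principal_iff.mpr (hξ.mono fun k hk => mem_sphere_zero_iff_norm.mpr hk.1))
  obtain ⟨hξ₀T, hqξ₀⟩ := hlim ξ ξ₀ (hξ.mono fun k hk => hk.2.1) hconv
  have hξ₀F : ξ₀ ∈ F :=
    F.closed_of_finiteDimensional.mem_of_tendsto hconv (hξ.mono fun k hk => hk.2.2)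
  obtain ⟨ζ, hζU, rfl⟩ : ξ₀ ∈ U.map T.subtype := hFT ▸ ⟨hξ₀F, hξ₀T⟩
  have hζ : (⟨ζ, hζU⟩ : U) ≠ 0 := by
    rintro hζ0
    obtain rfl := (Submodule.mk_eq_zero _ _).mp hζ0
    simp at hξ₀
  exact hqξ₀.not_gt (hUpos _ hζ)

variable {M : Type*} [AddCommGroup M] [Module ℝ M] [FiniteDimensional ℝ M]
  (q : QuadraticForm ℝ M) (T : Submodule ℝ M)

lemma exists_nonpos_and_finrank_eq_sigNeg :
    ∃ V ≤ T, finrank ℝ V = sigNeg (q.restrict T) ∧ ∀ ξ ∈ V, q ξ ≤ 0 := by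
  obtain ⟨U, hU, hneg⟩ := exists_finrank_eq_sigNeg_and_negDef (q.restrict T)
  refine ⟨U.map T.subtype, T.map_subtype_le U, by rwa [Submodule.finrank_map_subtype_eq], ?_⟩
  rintro _ ⟨ξ, hξ, rfl⟩
  simpa using hneg.nonneg ⟨ξ, hξ⟩

lemma exists_nonneg_and_finrank_add_sigNeg :
    ∃ V ≤ T, finrank ℝ V + sigNeg (q.restrict T) = finrank ℝ T ∧ ∀ ξ ∈ V, 0 ≤ q ξ := by
  obtain ⟨U, hU, hpos⟩ := exists_finrank_eq_sigPos_and_posDef (q.restrict T)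
  have hdisj : U ⊓ (q.restrict T).radical = ⊥ := by
    refine (Submodule.eq_bot_iff _).mpr fun ξ hξ => ?_
    by_contra hξ0
    exact (hpos ⟨ξ, hξ.1⟩ (by simpa using hξ0)).ne' (QuadraticMap.mem_radical_iff'.mp hξ.2).1
  have hrank := Submodule.finrank_sup_add_finrank_inf_eq U (q.restrict T).radical
  rw [hdisj, finrank_bot] at hrank
  have hsig := QuadraticForm.sigPos_add_sigNeg_add_radical (Q := q.restrict T)
  refine ⟨(U ⊔ (q.restrict T).radical).map T.subtype, T.map_subtype_le _, ?_, ?_⟩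
  · rw [Submodule.finrank_map_subtype_eq]
    omega
  · rintro _ ⟨_, hξ, rfl⟩
    obtain ⟨u, hu, r, hr, rfl⟩ := Submodule.mem_sup.mp hξ
    have hur := (QuadraticMap.mem_radical_iff'.mp hr).2 u
    rw [add_comm r u] at hur
    exact (hpos.nonneg ⟨u, hu⟩).trans_eq hur.symm

lemma sigPos_add_sigNeg_eq_finrank {B : LinearMap.BilinForm ℝ M} (hB : B.IsSymm)
    (hT : ∀ ξ ∈ T, (∀ ζ ∈ T, B ξ ζ = 0) → ξ = 0) :
    sigPos (B.toQuadraticMap.restrict T) + sigNeg (B.toQuadraticMap.restrict T) = finrank ℝ T := by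
  have hrad : (B.toQuadraticMap.restrict T).radical = ⊥ := by
    refine (Submodule.eq_bot_iff _).mpr fun ξ hξ => Subtype.ext (hT ξ ξ.2 fun ζ hζ => ?_)
    have hpolar := (QuadraticMap.mem_radical_iff'.mp hξ).2 ⟨ζ, hζ⟩
    have hξξ := (QuadraticMap.mem_radical_iff'.mp hξ).1
    simp only [QuadraticMap.restrict_apply, LinearMap.BilinMap.toQuadraticMap_apply,
      Submodule.coe_add, map_add, LinearMap.add_apply, hB.eq ζ ξ] at hpolar hξξ
    linarith
  rw [← QuadraticForm.sigPos_add_sigNeg_add_radical, hrad, finrank_bot, add_zero]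

end Signature

section Coefficients

variable {E ι κ : Type*} [NormedAddCommGroup E] [NormedSpace ℝ E]

/-- The linear combinations `a ↦ ∑ i, a i • v i` of a finite family, as a continuous linear map. -/
def combination [Fintype ι] (v : ι → E) : (ι → ℝ) →L[ℝ] E :=
  ∑ i, (ContinuousLinearMap.proj (R := ℝ) (φ := fun _ : ι => ℝ) i).smulRight (v i)

lemma combination_apply [Fintype ι] (v : ι → E) (a : ι → ℝ) : combination v a = ∑ i, a i • v i := by
  simp [combination]

lemma tendsto_clm_apply {F G : Type*} [NormedAddCommGroup F] [NormedSpace ℝ F]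
    [NormedAddCommGroup G] [NormedSpace ℝ G] {l : Filter κ} {L : κ → F →L[ℝ] G} {L₀ : F →L[ℝ] G}
    {v : κ → F} {v₀ : F} (hL : Tendsto L l (𝓝 L₀)) (hv : Tendsto v l (𝓝 v₀)) :
    Tendsto (fun k => L k (v k)) l (𝓝 (L₀ v₀)) :=
  ((continuous_fst.clm_apply continuous_snd).tendsto (L₀, v₀)).comp (hL.prodMk_nhds hv)

lemma tendsto_coeff_of_linearIndependent [Fintype ι] [FiniteDimensional ℝ E] {l : Filter κ}
    {v : ι → E} (hv : LinearIndependent ℝ v) {w : κ → ι → E} (hw : Tendsto w l (𝓝 v))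
    {a : κ → ι → ℝ} {b : ι → ℝ} (h : Tendsto (fun k => ∑ i, a k i • w k i) l (𝓝 (∑ i, b i • v i))) :
    Tendsto a l (𝓝 b) := by
  simp only [← combination_apply] at h
  have hinj : Function.Injective (combination v) := fun a b hab =>
    (linearIndependent_iff_injective_fintypeLinearCombination.mp hv) (by
      simpa [combination_apply, Fintype.linearCombination_apply] using hab)
  obtain ⟨G, hG⟩ := ContinuousLinearMap.HasLeftInverse.of_injective_of_finiteDimensional hinj
  have hcomb : Tendsto (fun k => G ∘L combination (w k)) l (𝓝 (1 : (ι → ℝ) →L[ℝ] ι → ℝ)) := by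
    have hcont : Continuous fun w : ι → E => G ∘L combination w := by
      unfold combination
      fun_prop
    convert! (hcont.tendsto v).comp hw using 2
    exact ContinuousLinearMap.ext fun a => (hG a).symm
  have hunit : ∀ᶠ k in l, IsUnit (G ∘L combination (w k)) :=
    hcomb.eventually (Units.isOpen.mem_nhds isUnit_one)
  have hinv : Tendsto (fun k => Ring.inverse (G ∘L combination (w k))) l (𝓝 1) := by
    simpa [Function.comp_def] using
      (NormedRing.inverse_continuousAt (1 : ((ι → ℝ) →L[ℝ] ι → ℝ)ˣ)).tendsto.comp hcomb
  have hlim := tendsto_clm_apply hinv ((G.continuous.tendsto _).comp h)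
  rw [hG b, one_apply_eq_self] at hlim
  refine hlim.congr' (hunit.mono fun k hk => ?_)
  exact congrArg (fun L : (ι → ℝ) →L[ℝ] ι → ℝ => L (a k)) (Ring.inverse_mul_cancel _ hk)

lemma tendsto_coeff_of_linearIndepOn [FiniteDimensional ℝ E] {l : Filter κ} {s : Finset ι}
    {v : ι → E} (hv : LinearIndepOn ℝ v s) {w : κ → ι → E} (hw : Tendsto w l (𝓝 v))
    {a : κ → ι → ℝ} {b : ι → ℝ}
    (h : Tendsto (fun k => ∑ i ∈ s, a k i • w k i) l (𝓝 (∑ i ∈ s, b i • v i))) {i : ι}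
    (hi : i ∈ s) : Tendsto (fun k => a k i) l (𝓝 (b i)) := by
  simp only [← Finset.sum_coe_sort s] at h
  have hw' : Tendsto (fun k (j : s) => w k j) l (𝓝 fun j : s => v j) :=
    tendsto_pi_nhds.mpr fun j => tendsto_pi_nhds.mp hw j
  exact tendsto_pi_nhds.mp (tendsto_coeff_of_linearIndependent (a := fun k (j : s) => a k j)
    (b := fun j : s => b j) hv hw' h) ⟨i, hi⟩

end Coefficients

section Hessian

open LinearMap (BilinForm)

variable {L : Vec n × Vec n → ℝ}

/-- The second derivative of `L` at `z` as a bilinear form on ℝ²ⁿ. -/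
def hessForm (L : Vec n × Vec n → ℝ) (z : Vec n × Vec n) : BilinForm ℝ (Vec n × Vec n) :=
  (fderiv ℝ (fderiv ℝ L) z).toLinearMap₁₂

lemma hess_eq_hessForm (hL : ContDiff ℝ 2 L) (z ξ ζ : Vec n × Vec n) :
    hess L z ξ ζ = hessForm L z ζ ξ := by
  have hdiff : DifferentiableAt ℝ (fderiv ℝ L) z :=
    (hL.fderiv_right (m := 1) le_rfl).differentiable one_ne_zero z
  simp [hess, hessForm, fderiv_clm_apply hdiff (differentiableAt_const ξ)]

lemma hessForm_isSymm (hL : ContDiff ℝ 2 L) (z : Vec n × Vec n) : (hessForm L z).IsSymm :=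
  ⟨fun ξ ζ => (hL.contDiffAt.isSymmSndFDerivAt (by simp)) ξ ζ⟩

lemma negIndex_hess_eq_sigNeg (hL : ContDiff ℝ 2 L) (z : Vec n × Vec n)
    (T : Submodule ℝ (Vec n × Vec n)) :
    negIndex (hess L z) (· ∈ T) = sigNeg ((hessForm L z).toQuadraticMap.restrict T) := by
  refine IsGreatest.csSup_eq ⟨?_, ?_⟩
  · obtain ⟨U, hU, hneg⟩ :=
      exists_finrank_eq_sigNeg_and_negDef ((hessForm L z).toQuadraticMap.restrict T)
    refine ⟨U.map T.subtype, fun ξ hξ => T.map_subtype_le U hξ,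
      by rw [Submodule.finrank_map_subtype_eq, hU], ?_⟩
    rintro _ ⟨ξ, hξ, rfl⟩ hξ0
    have := hneg ⟨ξ, hξ⟩ (by
      rintro hζ
      obtain rfl := (Submodule.mk_eq_zero _ _).mp hζ
      exact hξ0 rfl)
    simpa [hess_eq_hessForm hL] using this
  · rintro _ ⟨W, hWT, rfl, hneg⟩
    rw [← (Submodule.comapSubtypeEquivOfLe hWT).finrank_eq]
    refine le_sigNeg_of_negDef _ fun ξ hξ => ?_
    have := hneg ξ.1 ξ.2 (by simpa using hξ)
    rw [hess_eq_hessForm hL] at this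
    simpa using this

/-- The coordinate functional `(x, y) ↦ x i`. -/
def coordX (i : Fin n) : Vec n × Vec n →L[ℝ] ℝ := .proj i ∘L .fst ℝ (Vec n) (Vec n)

/-- The coordinate functional `(x, y) ↦ y i`. -/
def coordY (i : Fin n) : Vec n × Vec n →L[ℝ] ℝ := .proj i ∘L .snd ℝ (Vec n) (Vec n)

lemma fderiv_add_coordinates {F : Vec n → ℝ} (hF : Differentiable ℝ F) (a b e : Vec n) (C : ℝ)
    (z ξ : Vec n × Vec n) :
    fderiv ℝ (fun z : Vec n × Vec n =>
      F z.1 + ∑ i, (a i * z.1 i + b i * z.2 i - e i * (z.1 i * z.2 i)) + C) z ξ =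
    fderiv ℝ F z.1 ξ.1 +
      ∑ i, (a i * ξ.1 i + b i * ξ.2 i - e i * (z.1 i * ξ.2 i + z.2 i * ξ.1 i)) := by
  have hsum := HasFDerivAt.fun_sum (u := univ) fun i _ =>
    (((coordX i).hasFDerivAt (x := z)).const_mul (a i) |>.add
      ((coordY i).hasFDerivAt.const_mul (b i))).sub
      (((coordX i).hasFDerivAt.mul (coordY i).hasFDerivAt).const_mul (e i))
  have hfull := (((hF z.1).hasFDerivAt.comp z hasFDerivAt_fst).add hsum).add_const C
  refine (congrArg (fun A => A ξ) hfull.fderiv).trans ?_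
  simp [coordX, coordY, mul_add]

lemma hess_add_coordinates {F : Vec n → ℝ} (hF : ContDiff ℝ 2 F) (a b e : Vec n) (C : ℝ)
    (z ξ ζ : Vec n × Vec n) :
    hess (fun z => F z.1 + ∑ i, (a i * z.1 i + b i * z.2 i - e i * (z.1 i * z.2 i)) + C) z ξ ζ =
      fderiv ℝ (fderiv ℝ F) z.1 ζ.1 ξ.1 - ∑ i, e i * (ζ.1 i * ξ.2 i + ζ.2 i * ξ.1 i) := by
  have hdiff : Differentiable ℝ (fderiv ℝ F) :=
    (hF.fderiv_right (m := 1) le_rfl).differentiable one_ne_zero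
  have hsum := HasFDerivAt.fun_sum (u := univ) fun i _ =>
    (((((coordX i).hasFDerivAt (x := z)).mul_const (ξ.2 i)).add
      ((coordY i).hasFDerivAt.mul_const (ξ.1 i))).const_mul (e i)).const_sub
        (a i * ξ.1 i + b i * ξ.2 i)
  have hfirst := ((hdiff z.1).hasFDerivAt.comp z hasFDerivAt_fst).clm_apply
    (hasFDerivAt_const ξ.1 z)
  simp only [hess, fderiv_add_coordinates (hF.differentiable two_ne_zero)]
  refine (congrArg (fun A => A ζ) (hfirst.add hsum).fderiv).trans ?_
  simp [coordX, coordY, ← Finset.sum_neg_distrib, sub_eq_add_neg, mul_comm, mul_add, add_comm]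

end Hessian

section Lagrangians

variable (D : Setting n P Q)

/-- The part of the Lagrange functions of R and of S(t) that is nonlinear in `x` and does not
involve `y`. Inactive inequalities enter with multiplier zero. -/
def xLag (lam : P → ℝ) (mu : Q → ℝ) (x : Vec n) : ℝ :=
  D.f x - ∑ p, lam p * D.h p x - ∑ q, mu q * D.g q x

/-- The second derivative of `xLag`. -/
def xHess (lam : P → ℝ) (mu : Q → ℝ) (x : Vec n) : Vec n →L[ℝ] Vec n →L[ℝ] ℝ :=
  fderiv ℝ (fderiv ℝ D.f) x - ∑ p, lam p • fderiv ℝ (fderiv ℝ (D.h p)) x -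
    ∑ q, mu q • fderiv ℝ (fderiv ℝ (D.g q)) x

lemma contDiff_xLag (lam : P → ℝ) (mu : Q → ℝ) : ContDiff ℝ 2 (xLag D lam mu) := by
  have := D.hf
  have := D.hh
  have := D.hg
  unfold xLag
  fun_prop

lemma fderiv_fderiv_xLag (lam : P → ℝ) (mu : Q → ℝ) (x : Vec n) :
    fderiv ℝ (fderiv ℝ (xLag D lam mu)) x = xHess D lam mu x := by
  have hfirst : ∀ {φ : Vec n → ℝ}, ContDiff ℝ 2 φ → ∀ z, HasFDerivAt φ (fderiv ℝ φ z) z :=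
    fun hφ z => (hφ.differentiable two_ne_zero z).hasFDerivAt
  have hsecond : ∀ {φ : Vec n → ℝ}, ContDiff ℝ 2 φ →
      HasFDerivAt (fderiv ℝ φ) (fderiv ℝ (fderiv ℝ φ) x) x := fun hφ =>
    ((hφ.fderiv_right (m := 1) le_rfl).differentiable one_ne_zero x).hasFDerivAt
  have hgrad : fderiv ℝ (xLag D lam mu) = fun z =>
      fderiv ℝ D.f z - ∑ p, lam p • fderiv ℝ (D.h p) z - ∑ q, mu q • fderiv ℝ (D.g q) z :=
    funext fun z => (((hfirst D.hf z).sub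
      (HasFDerivAt.fun_sum fun p _ => (hfirst (D.hh p) z).const_mul (lam p))).sub
      (HasFDerivAt.fun_sum fun q _ => (hfirst (D.hg q) z).const_mul (mu q))).fderiv
  rw [hgrad]
  exact (((hsecond D.hf).sub
      (HasFDerivAt.fun_sum fun p _ => (hsecond (D.hh p)).const_smul (lam p))).sub
      (HasFDerivAt.fun_sum fun q _ => (hsecond (D.hg q)).const_smul (mu q))).fderiv

lemma continuous_fderiv_fderiv {φ : Vec n → ℝ} (hφ : ContDiff ℝ 2 φ) :
    Continuous (fderiv ℝ (fderiv ℝ φ)) :=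
  (hφ.fderiv_right (m := 1) le_rfl).continuous_fderiv one_ne_zero

lemma tendsto_xHess {κ : Type*} {l : Filter κ} {lam : κ → P → ℝ} {mu : κ → Q → ℝ}
    {x u : κ → Vec n} {lam₀ : P → ℝ} {mu₀ : Q → ℝ} {x₀ u₀ : Vec n}
    (hlam : Tendsto lam l (𝓝 lam₀)) (hmu : Tendsto mu l (𝓝 mu₀)) (hx : Tendsto x l (𝓝 x₀))
    (hu : Tendsto u l (𝓝 u₀)) :
    Tendsto (fun k => xHess D (lam k) (mu k) (x k) (u k) (u k)) l
      (𝓝 (xHess D lam₀ mu₀ x₀ u₀ u₀)) := by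
  have hsecond : ∀ {φ : Vec n → ℝ}, ContDiff ℝ 2 φ →
      Tendsto (fun k => fderiv ℝ (fderiv ℝ φ) (x k) (u k) (u k)) l
        (𝓝 (fderiv ℝ (fderiv ℝ φ) x₀ u₀ u₀)) := fun hφ =>
    tendsto_clm_apply (tendsto_clm_apply
      (((continuous_fderiv_fderiv hφ).tendsto x₀).comp hx) hu) hu
  simp only [xHess, sub_apply, _root_.sum_apply, smul_apply, smul_eq_mul]
  exact ((hsecond D.hf).sub
    (tendsto_finsetSum _ fun p _ => (tendsto_pi_nhds.mp hlam p).mul (hsecond (D.hh p)))).sub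
    (tendsto_finsetSum _ fun q _ => (tendsto_pi_nhds.mp hmu q).mul (hsecond (D.hg q)))

/-- The multipliers of the inequalities active at `x`, extended by zero. -/
def activeMu (x : Vec n) (mu : Q → ℝ) : Q → ℝ := (Q0 D x : Set Q).indicator mu

/-- The difference of the multipliers of the constraints `-t ≤ x i * y i` and `x i * y i ≤ t`,
each extended by zero to inactive indices. -/
def eta (t : ℝ) (x y : Vec n) (M : SMult n P Q) : Vec n :=
  (Hge t x y : Set (Fin n)).indicator M.etaGe - (Hle t x y : Set (Fin n)).indicator M.etaLe

lemma exists_LagR_eq (x y : Vec n) (M : TMult n P Q) :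
    ∃ (a b : Vec n) (C : ℝ), LagR D x y M = fun z => xLag D M.lam (activeMu D x M.mu1) z.1 +
      ∑ i, (a i * z.1 i + b i * z.2 i - (0 : Vec n) i * (z.1 i * z.2 i)) + C := by
  refine ⟨fun i => -(if i ∈ a01 x y then M.sig1 i else 0) - if i ∈ a00 x y then M.rho1 i else 0,
    fun i => D.c i + (if i ∈ Eact D y then M.mu2 i else 0) - M.mu3 -
      (if i ∈ a10 x y then M.sig2 i else 0) - if i ∈ a00 x y then M.rho2 i else 0,
    M.mu3 * (n - D.s) - ∑ i ∈ Eact D y, M.mu2 i * (1 + D.ε), funext fun z => ?_⟩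
  simp only [LagR, dot, xLag, activeMu, Set.indicator_apply, Finset.mem_coe, ite_mul, zero_mul,
    sub_mul, add_mul, neg_mul, mul_sub, Finset.sum_add_distrib, Finset.sum_sub_distrib,
    Finset.sum_neg_distrib, Finset.sum_ite_mem, Finset.univ_inter, Finset.sum_const_zero,
    Pi.zero_apply, Finset.mul_sum]
  ring

lemma exists_LagS_eq (t : ℝ) (x y : Vec n) (M : SMult n P Q) :
    ∃ (a b : Vec n) (C : ℝ), LagS D t x y M = fun z => xLag D M.lam (activeMu D x M.mu1) z.1 +
      ∑ i, (a i * z.1 i + b i * z.2 i - eta t x y M i * (z.1 i * z.2 i)) + C := by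
  refine ⟨0, fun i => D.c i + (if i ∈ Eact D y then M.mu2 i else 0) - M.mu3 -
      if i ∈ Nact y then M.nu i else 0,
    M.mu3 * (n - D.s) - (∑ i ∈ Eact D y, M.mu2 i * (1 + D.ε)) - (∑ i ∈ Hge t x y, M.etaGe i * t) -
      ∑ i ∈ Hle t x y, M.etaLe i * t, funext fun z => ?_⟩
  simp only [LagS, dot, xLag, eta, activeMu, Set.indicator_apply, Pi.sub_apply, Finset.mem_coe,
    ite_mul, zero_mul, sub_mul, add_mul, mul_sub, mul_add, Finset.sum_add_distrib,
    Finset.sum_sub_distrib, Finset.sum_ite_mem, Finset.univ_inter, Finset.sum_const_zero,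
    Pi.zero_apply, Finset.mul_sum]
  ring

lemma contDiff_LagR (x y : Vec n) (M : TMult n P Q) : ContDiff ℝ 2 (LagR D x y M) := by
  have := D.hf
  have := D.hh
  have := D.hg
  unfold LagR dot
  fun_prop

lemma contDiff_LagS (t : ℝ) (x y : Vec n) (M : SMult n P Q) :
    ContDiff ℝ 2 (LagS D t x y M) := by
  have := D.hf
  have := D.hh
  have := D.hg
  unfold LagS dot
  fun_prop

lemma hessForm_LagR (x y : Vec n) (M : TMult n P Q) (z ξ : Vec n × Vec n) :
    hessForm (LagR D x y M) z ξ ξ = xHess D M.lam (activeMu D x M.mu1) z.1 ξ.1 ξ.1 := by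
  obtain ⟨a, b, C, h⟩ := exists_LagR_eq D x y M
  rw [← hess_eq_hessForm (contDiff_LagR D x y M), h, hess_add_coordinates (contDiff_xLag D _ _),
    fderiv_fderiv_xLag]
  simp

lemma hessForm_LagS (t : ℝ) (x y : Vec n) (M : SMult n P Q) (z ξ : Vec n × Vec n) :
    hessForm (LagS D t x y M) z ξ ξ = xHess D M.lam (activeMu D x M.mu1) z.1 ξ.1 ξ.1 -
      2 * ∑ i, eta t x y M i * (ξ.1 i * ξ.2 i) := by
  obtain ⟨a, b, C, h⟩ := exists_LagS_eq D t x y M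
  rw [← hess_eq_hessForm (contDiff_LagS D t x y M), h, hess_add_coordinates (contDiff_xLag D _ _),
    fderiv_fderiv_xLag, Finset.mul_sum]
  simp only [mul_add, two_mul, mul_comm (ξ.2 _)]

end Lagrangians

section Multipliers

variable {D : Setting n P Q} {t : ℝ} {x y xb yb : Vec n}

lemma sum_indicator_smul {ι E : Type*} [Fintype ι] [AddCommGroup E] [Module ℝ E] (s : Finset ι)
    (a : ι → ℝ) (v : ι → E) : ∑ i, (s : Set ι).indicator a i • v i = ∑ i ∈ s, a i • v i := by
  simp [Set.indicator_apply, ite_smul]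

lemma sum_smul_ex (s : Finset (Fin n)) (a : Vec n) :
    ∑ i ∈ s, a i • ex i = ((s : Set (Fin n)).indicator a, 0) := by
  ext j <;> simp [ex, Prod.fst_sum, Prod.snd_sum, Pi.single_apply, Set.indicator_apply]

lemma sum_smul_ey (s : Finset (Fin n)) (a : Vec n) :
    ∑ i ∈ s, a i • ey i = (0, (s : Set (Fin n)).indicator a) := by
  ext j <;> simp [ey, Prod.fst_sum, Prod.snd_sum, Pi.single_apply, Set.indicator_apply]

lemma sum_smul_hvec (s : Finset (Fin n)) (a : Vec n) :
    ∑ i ∈ s, a i • hvec x y i =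
      ((s : Set (Fin n)).indicator a * y, (s : Set (Fin n)).indicator a * x) := by
  ext j <;> simp [hvec, Prod.fst_sum, Prod.snd_sum, Pi.single_apply, Set.indicator_apply]

lemma sum_smul_fst {ι : Type*} (s : Finset ι) (a : ι → ℝ) (v : ι → Vec n) :
    ∑ i ∈ s, a i • ((v i, 0) : Vec n × Vec n) = (∑ i ∈ s, a i • v i, 0) := by
  simp [Prod.ext_iff, Prod.fst_sum, Prod.snd_sum]

/-- The coefficients of the vectors `(e_i, 0)` in the T-stationarity equation. -/
def TMult.xPart (x y : Vec n) (M : TMult n P Q) : Vec n :=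
  (a01 x y : Set (Fin n)).indicator M.sig1 + (a00 x y : Set (Fin n)).indicator M.rho1

/-- The coefficients of the vectors `(0, e_i)` in the T-stationarity equation, without those
of the bounds `y i ≤ 1 + ε`. -/
def TMult.yPart (x y : Vec n) (M : TMult n P Q) : Vec n :=
  (a10 x y : Set (Fin n)).indicator M.sig2 + (a00 x y : Set (Fin n)).indicator M.rho2

/-- The counterpart of `TMult.xPart` for the problem S(t). -/
def SMult.xPart (t : ℝ) (x y : Vec n) (M : SMult n P Q) : Vec n := eta t x y M * y

/-- The counterpart of `TMult.yPart` for the problem S(t). -/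
def SMult.yPart (t : ℝ) (x y : Vec n) (M : SMult n P Q) : Vec n :=
  eta t x y M * x + (Nact y : Set (Fin n)).indicator M.nu

lemma TStatEq.grad_eq {M : TMult n P Q} (h : TStatEq D x y M) :
    grad D.f x = ∑ p, M.lam p • grad (D.h p) x + ∑ q, activeMu D x M.mu1 q • grad (D.g q) x +
      M.xPart x y := by
  have := congrArg Prod.fst h
  simp only [sum_smul_fst, Finset.sum_add_distrib, sum_smul_ex, sum_smul_ey, eAll] at this
  simpa [activeMu, sum_indicator_smul, TMult.xPart, add_assoc] using this

lemma TStatEq.c_eq {M : TMult n P Q} (h : TStatEq D x y M) :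
    D.c = (fun _ => M.mu3) - (Eact D y : Set (Fin n)).indicator M.mu2 + M.yPart x y := by
  have := congrArg Prod.snd h
  simp only [sum_smul_fst, Finset.sum_add_distrib, sum_smul_ex, sum_smul_ey, eAll] at this
  simp only [Prod.mk_add_mk, add_zero, Prod.mk_sub_mk, sub_zero, zero_sub, Prod.smul_mk,
    smul_zero, zero_add] at this
  rw [this]
  ext i
  simp only [TMult.yPart, Pi.add_apply, Pi.neg_apply, Pi.smul_apply, smul_eq_mul, mul_one,
    Pi.sub_apply]
  ring

lemma KKTEq.grad_eq {M : SMult n P Q} (h : KKTEq D t x y M) :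
    grad D.f x = ∑ p, M.lam p • grad (D.h p) x + ∑ q, activeMu D x M.mu1 q • grad (D.g q) x +
      M.xPart t x y := by
  have := congrArg Prod.fst h
  simp only [sum_smul_fst, sum_smul_hvec, sum_smul_ey, eAll] at this
  simpa [activeMu, sum_indicator_smul, SMult.xPart, eta, sub_mul, add_sub_assoc] using this

lemma KKTEq.c_eq {M : SMult n P Q} (h : KKTEq D t x y M) :
    D.c = (fun _ => M.mu3) - (Eact D y : Set (Fin n)).indicator M.mu2 + M.yPart t x y := by
  have := congrArg Prod.snd h
  simp only [sum_smul_fst, sum_smul_hvec, sum_smul_ey, eAll] at this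
  simp only [Prod.mk_add_mk, add_zero, Prod.mk_sub_mk, sub_zero, zero_sub, Prod.smul_mk,
    smul_zero] at this
  rw [this]
  ext i
  simp only [SMult.yPart, eta, Pi.add_apply, Pi.sub_apply, Pi.neg_apply, Pi.smul_apply,
    smul_eq_mul, mul_one, Pi.mul_apply]
  ring

end Multipliers

section ActiveGradients

variable {D : Setting n P Q} {x y xb yb : Vec n}

lemma a10_union_a00 (x y : Vec n) : a10 x y ∪ a00 x y = Nact y := by
  ext i
  simp only [a10, a00, Nact, mem_union, mem_filter_univ]
  tauto

lemma a01_union_a00 (hy : ∀ i, 0 ≤ y i) : a01 x y ∪ a00 x y = Nact x := by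
  ext i
  have := (hy i).lt_or_eq'
  simp only [a01, a00, Nact, mem_union, mem_filter_univ]
  tauto

/-- Indices of the possible constraint gradients of R at a point where `∑ i, y i = n - s`:
equalities, inequalities, upper bounds, the sum constraint, and the coordinates of `x` and `y`. -/
abbrev GradIdx (n : ℕ) (P Q : Type*) := P ⊕ Q ⊕ Fin n ⊕ Unit ⊕ Fin n ⊕ Fin n

/-- The indices of the constraint gradients occurring in MPOC-LICQ. -/
def activeIdx (D : Setting n P Q) (x y : Vec n) : Finset (GradIdx n P Q) :=
  univ.disjSum <| (Q0 D x).disjSum <| (Eact D y).disjSum <| univ.disjSum <|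
    (Nact x).disjSum (Nact y)

/-- The constraint gradients of R at `x`, with the coordinate vectors `(e_i, 0)` and `(0, e_i)`
tilted to `(e_i, u i • e_i)` and `(w i • e_i, e_i)`. Since
`(y i • e_i, x i • e_i) = y i • (e_i, (x i / y i) • e_i)`, tilting turns the gradients of R into
those of S(t). -/
def tiltedGrad (D : Setting n P Q) (x u w : Vec n) : GradIdx n P Q → Vec n × Vec n :=
  Sum.elim (fun p => (grad (D.h p) x, 0)) <| Sum.elim (fun q => (grad (D.g q) x, 0)) <|
    Sum.elim ey <| Sum.elim (fun _ => eAll) <|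
      Sum.elim (fun i => ex i + u i • ey i) (fun i => ey i + w i • ex i)

/-- A family of coefficients of the vectors `tiltedGrad`. -/
def gradCoeff (lam : P → ℝ) (mu : Q → ℝ) (nu : Vec n) (mu3 : ℝ) (a b : Vec n) :
    GradIdx n P Q → ℝ :=
  Sum.elim lam <| Sum.elim mu <| Sum.elim nu <| Sum.elim (fun _ => mu3) <| Sum.elim a b

lemma MPOC_LICQ.linearIndepOn (h : MPOC_LICQ D x y) (hsum : ∑ i, y i = (n : ℝ) - D.s)
    (hy : ∀ i, 0 ≤ y i) : LinearIndepOn ℝ (tiltedGrad D x 0 0) (activeIdx D x y) := by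
  refine linearIndepOn_finset_iff.mpr fun a ha => ?_
  have := h (fun p => a (.inl p)) (fun q => a (.inr (.inl q))) (fun i => a (.inr (.inr (.inl i))))
    (a (.inr (.inr (.inr (.inl ()))))) (fun i => a (.inr (.inr (.inr (.inr (.inl i))))))
    (fun i => a (.inr (.inr (.inr (.inr (.inr i)))))) (fun hne => absurd hsum hne) (by
      rw [a01_union_a00 hy, a10_union_a00, ← ha]
      simp [activeIdx, tiltedGrad, Finset.sum_disjSum, add_assoc])
  rw [a01_union_a00 hy, a10_union_a00] at this
  obtain ⟨hlam, hmu1, hmu2, hmu3, hs1, hs2⟩ := this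
  simpa [activeIdx, Finset.mem_disjSum] using ⟨hlam, hmu1, hmu2, fun _ => hmu3, hs1, hs2⟩

lemma sum_gradCoeff_smul (xb yb x u w : Vec n) (lam : P → ℝ) (mu : Q → ℝ) (nu : Vec n)
    (mu3 : ℝ) (a b : Vec n) :
    ∑ j ∈ activeIdx D xb yb, gradCoeff lam mu nu mu3 a b j • tiltedGrad D x u w j =
      (∑ p, lam p • grad (D.h p) x + ∑ q ∈ Q0 D xb, mu q • grad (D.g q) x +
          ((Nact xb : Set (Fin n)).indicator a + (Nact yb : Set (Fin n)).indicator b * w),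
        (fun _ => mu3) + (Eact D yb : Set (Fin n)).indicator nu +
          ((Nact xb : Set (Fin n)).indicator a * u + (Nact yb : Set (Fin n)).indicator b)) := by
  simp only [activeIdx, Finset.sum_disjSum, gradCoeff, tiltedGrad, Sum.elim_inl, Sum.elim_inr,
    smul_add, smul_smul, Finset.sum_add_distrib, sum_smul_fst, sum_smul_ex, sum_smul_ey, eAll]
  ext i <;> simp [Set.indicator_mul_left, add_assoc, add_left_comm]

lemma continuous_grad {φ : Vec n → ℝ} (hφ : ContDiff ℝ 2 φ) : Continuous (grad φ) := by
  have := hφ.continuous_fderiv two_ne_zero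
  unfold grad
  fun_prop

lemma tendsto_tiltedGrad {κ : Type*} {l : Filter κ} {X u w : κ → Vec n} {u₀ w₀ : Vec n}
    (hX : Tendsto X l (𝓝 xb)) (hu : Tendsto u l (𝓝 u₀)) (hw : Tendsto w l (𝓝 w₀)) :
    Tendsto (fun k => tiltedGrad D (X k) (u k) (w k)) l (𝓝 (tiltedGrad D xb u₀ w₀)) := by
  have hgrad : ∀ {φ : Vec n → ℝ}, ContDiff ℝ 2 φ →
      Tendsto (fun k => ((grad φ (X k), 0) : Vec n × Vec n)) l (𝓝 (grad φ xb, 0)) :=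
    fun hφ => (((continuous_grad hφ).tendsto xb).comp hX).prodMk_nhds tendsto_const_nhds
  have htilt : ∀ {u : κ → Vec n} {u₀ : Vec n} (v v' : Vec n × Vec n) (i : Fin n),
      Tendsto u l (𝓝 u₀) → Tendsto (fun k => v + u k i • v') l (𝓝 (v + u₀ i • v')) :=
    fun v v' i hu => tendsto_const_nhds.add ((tendsto_pi_nhds.mp hu i).smul_const v')
  rw [tendsto_pi_nhds]
  rintro (p | q | i | - | i | i)
  exacts [hgrad (D.hh p), hgrad (D.hg q), tendsto_const_nhds, tendsto_const_nhds,
    htilt (ex i) (ey i) i hu, htilt (ey i) (ex i) i hw]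

end ActiveGradients

section MultiplierConvergence

variable {D : Setting n P Q} {x y xb yb : Vec n}

lemma sum_smul_eq_sum_univ_smul {s : Finset Q} {mu : Q → ℝ} (h : ∀ q, mu q ≠ 0 → q ∈ s)
    (v : Q → Vec n) : ∑ q ∈ s, mu q • v q = ∑ q, mu q • v q :=
  Finset.sum_subset (Finset.subset_univ s) fun q _ hq => by
    rw [not_imp_comm.mp (h q) hq, zero_smul]

lemma sum_gradCoeff_smul_of_support {lam : P → ℝ} {mu : Q → ℝ} {nu : Vec n} {mu3 : ℝ}
    {a b u w : Vec n} (hmu : ∀ q, mu q ≠ 0 → q ∈ Q0 D xb) (hnu : ∀ i, nu i ≠ 0 → i ∈ Eact D yb)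
    (ha : (Nact xb : Set (Fin n)).indicator a + (Nact yb : Set (Fin n)).indicator b * w = a)
    (hb : (Nact xb : Set (Fin n)).indicator a * u + (Nact yb : Set (Fin n)).indicator b = b) :
    ∑ j ∈ activeIdx D xb yb, gradCoeff lam mu nu mu3 a b j • tiltedGrad D x u w j =
      (∑ p, lam p • grad (D.h p) x + ∑ q, mu q • grad (D.g q) x + a,
        (fun _ => mu3) + nu + b) := by
  rw [sum_gradCoeff_smul, ha, hb, sum_smul_eq_sum_univ_smul hmu,
    Set.indicator_eq_self.mpr fun i hi => hnu i hi]

lemma TStatEq.sum_gradCoeff_smul {M : TMult n P Q} (h : TStatEq D x y M) :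
    ∑ j ∈ activeIdx D x y, gradCoeff M.lam (activeMu D x M.mu1)
      (-(Eact D y : Set (Fin n)).indicator M.mu2) M.mu3 (M.xPart x y) (M.yPart x y) j •
        tiltedGrad D x 0 0 j = (grad D.f x, D.c) := by
  rw [sum_gradCoeff_smul_of_support, ← h.grad_eq, ← sub_eq_add_neg, ← h.c_eq]
  · exact fun q hq => Set.mem_of_indicator_ne_zero hq
  · exact fun i hi => Set.mem_of_indicator_ne_zero (neg_ne_zero.mp hi)
  · ext i
    by_cases hx : x i = 0 <;> simp [TMult.xPart, Nact, a01, a00, hx]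
  · ext i
    by_cases hy : y i = 0 <;> simp [TMult.yPart, Nact, a10, a00, hy]

/-- The quotients `x i / y i`, set to zero where the reference vector `r` vanishes. -/
def ratio (r x y : Vec n) : Vec n := fun i => if r i = 0 then 0 else x i / y i

lemma tendsto_ratio {κ : Type*} {l : Filter κ} {X Y : κ → Vec n} (hX : Tendsto X l (𝓝 xb))
    (hY : Tendsto Y l (𝓝 yb)) (hxy : ∀ i, xb i * yb i = 0) :
    Tendsto (fun k => ratio yb (X k) (Y k)) l (𝓝 0) := by
  refine tendsto_pi_nhds.mpr fun i => ?_
  by_cases hi : yb i = 0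
  · simpa [ratio, hi] using tendsto_const_nhds
  · have hx : xb i = 0 := (mul_eq_zero.mp (hxy i)).resolve_right hi
    have hdiv : Tendsto (fun k => X k i / Y k i) l (𝓝 (xb i / yb i)) :=
      (tendsto_pi_nhds.mp hX i).div (tendsto_pi_nhds.mp hY i) hi
    simpa [ratio, hi, hx] using hdiv

lemma KKTEq.sum_gradCoeff_smul {t : ℝ} {M : SMult n P Q} (h : KKTEq D t x y M)
    (hxy : ∀ i, xb i * yb i = 0) (hQ : Q0 D x ⊆ Q0 D xb) (hE : Eact D y ⊆ Eact D yb)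
    (hx : ∀ i, xb i ≠ 0 → x i ≠ 0) (hy : ∀ i, yb i ≠ 0 → y i ≠ 0) :
    ∑ j ∈ activeIdx D xb yb, gradCoeff M.lam (activeMu D x M.mu1)
      (-(Eact D y : Set (Fin n)).indicator M.mu2) M.mu3 (M.xPart t x y) (M.yPart t x y) j •
        tiltedGrad D x (ratio yb x y) (ratio xb y x) j = (grad D.f x, D.c) := by
  rw [sum_gradCoeff_smul_of_support, ← h.grad_eq, ← sub_eq_add_neg, ← h.c_eq]
  · exact fun q hq => hQ (Set.mem_of_indicator_ne_zero hq)
  · exact fun i hi => hE (Set.mem_of_indicator_ne_zero (neg_ne_zero.mp hi))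
  · ext i
    by_cases hxi : xb i = 0
    · by_cases hyi : yb i = 0 <;> simp [ratio, Nact, hxi, hyi]
    · have hyi : yb i = 0 := (mul_eq_zero.mp (hxy i)).resolve_left hxi
      by_cases h0 : y i = 0 <;>
        simp [ratio, Nact, hxi, hyi, SMult.xPart, SMult.yPart, h0, mul_assoc,
          mul_div_cancel₀ _ (hx i hxi)]
  · ext i
    by_cases hyi : yb i = 0
    · by_cases hxi : xb i = 0 <;> simp [ratio, Nact, hxi, hyi]
    · have hxi : xb i = 0 := (mul_eq_zero.mp (hxy i)).resolve_right hyi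
      simp [ratio, Nact, hxi, hyi, SMult.xPart, SMult.yPart, hy i hyi, mul_assoc,
        mul_div_cancel₀ _ (hy i hyi)]

end MultiplierConvergence

section TStationary

variable {D : Setting n P Q} {x y : Vec n} {M : TMult n P Q} {i : Fin n}

lemma notMem_Eact (hi : y i = 0) : i ∉ Eact D y := by
  have := D.hεpos
  simp only [Eact, mem_filter_univ, hi]
  linarith

lemma TMult.yPart_eq_zero {P Q : Type*} {M : TMult n P Q} (hy : y i ≠ 0) :
    M.yPart x y i = 0 := by simp [yPart, a10, a00, hy]

lemma TStatAt.sum_eq (h : TStatAt D x y M) : ∑ i, y i = (n : ℝ) - D.s := by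
  obtain ⟨⟨-, -, hsum, -, -⟩, -, hmu2, -, hmu3, -, heq⟩ := h
  by_contra hne
  have hmu3 : M.mu3 = 0 := (mul_eq_zero.mp hmu3).resolve_right (sub_ne_zero.mpr hne)
  have hy : y = 0 := funext fun i => by
    by_contra hi
    have hc : D.c i = M.mu3 - (Eact D y : Set (Fin n)).indicator M.mu2 i + M.yPart x y i :=
      congrFun heq.c_eq i
    rw [TMult.yPart_eq_zero hi, hmu3] at hc
    linarith [D.hcpos i, Set.indicator_nonneg hmu2 i]
  have hs : (D.s : ℝ) < n := mod_cast D.hs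
  simp only [hy, Pi.zero_apply, Finset.sum_const_zero] at hsum
  linarith

lemma MPOC_LICQ.exists_notMem_Eact (h : MPOC_LICQ D x y) (hsum : ∑ i, y i = (n : ℝ) - D.s) :
    ∃ j, y j ≠ 0 ∧ j ∉ Eact D y := by
  by_contra! hE
  have heAll : -eAll + ∑ i ∈ Eact D y, (1 : Vec n) i • ey i + ∑ i ∈ Nact y, (1 : Vec n) i • ey i =
      0 := by
    rw [sum_smul_ey, sum_smul_ey]
    ext i
    · simp [eAll]
    · by_cases hi : y i = 0
      · simp [eAll, Nact, hi, notMem_Eact (D := D) hi]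
      · simp [eAll, Nact, hi, hE i hi]
  have := h 0 0 1 (-1) 0 1 (absurd hsum) (by
    rw [a10_union_a00, ← heAll]
    simp only [Pi.zero_apply, zero_smul, sum_const_zero, add_zero, Pi.one_apply, one_smul,
      zero_add, neg_smul]
    abel)
  exact neg_ne_zero.mpr one_ne_zero this.2.2.2.1

-- A vanishing multiplier would force `c i = mu3 = c j` for an index `j` with `0 < y j < 1 + ε`.
lemma NondegTStatAt.yPart_ne_zero (h : NondegTStatAt D x y M) (hi : y i = 0) :
    M.yPart x y i ≠ 0 := by
  intro h0
  obtain ⟨j, hj, hjE⟩ := h.2.1.exists_notMem_Eact h.1.sum_eq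
  have hc : ∀ i, D.c i = M.mu3 - (Eact D y : Set (Fin n)).indicator M.mu2 i + M.yPart x y i :=
    congrFun h.1.2.2.2.2.2.2.c_eq
  have hij : i = j := D.hcinj (by
    have hiE := notMem_Eact (D := D) hi
    simp [hc i, hc j, h0, TMult.yPart_eq_zero hj, hiE, hjE])
  exact hj (hij ▸ hi)

lemma NondegTStatAt.xPart_ne_zero (h : NondegTStatAt D x y M) (hi : i ∈ a00 x y) :
    M.xPart x y i ≠ 0 := by
  have hi01 : i ∉ a01 x y := fun h01 => by simp_all [a00, a01]
  simpa [TMult.xPart, hi, hi01] using (h.2.2.2.2.2.1 i hi).1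

lemma NondegTStatAt.yPart_neg (h : NondegTStatAt D x y M) (hi : i ∈ a00 x y) :
    M.yPart x y i < 0 := by
  have hi10 : i ∉ a10 x y := fun h10 => by simp_all [a00, a10]
  simpa [TMult.yPart, hi, hi10] using (h.2.2.2.2.2.1 i hi).2

end TStationary

section Convergence

variable {κ : Type*} {l : Filter κ}

lemma eventually_forall_ne_zero {ι : Type*} [Finite ι] {a : κ → ι → ℝ} {b : ι → ℝ}
    (h : Tendsto a l (𝓝 b)) : ∀ᶠ k in l, ∀ i, b i ≠ 0 → a k i ≠ 0 :=
  eventually_all.mpr fun i => by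
    by_cases hi : b i = 0
    · simp [hi]
    · exact ((tendsto_pi_nhds.mp h i).eventually_ne hi).mono fun _ hk _ => hk

lemma tendsto_indicator_of_eventually_subset {ι : Type*} {s : κ → Finset ι} {s₀ : Finset ι}
    {a : κ → ι → ℝ} {b : ι → ℝ} (hs : ∀ᶠ k in l, s k ⊆ s₀)
    (h : ∀ i ∈ s₀, Tendsto (fun k => (s k : Set ι).indicator (a k) i) l (𝓝 (b i))) :
    Tendsto (fun k => (s k : Set ι).indicator (a k)) l (𝓝 ((s₀ : Set ι).indicator b)) := by
  refine tendsto_pi_nhds.mpr fun i => ?_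
  by_cases hi : i ∈ s₀
  · simpa [hi] using h i hi
  · refine tendsto_const_nhds.congr' ?_
    filter_upwards [hs] with k hk
    rw [Set.indicator_of_notMem (mod_cast hi),
      Set.indicator_of_notMem (mod_cast fun h => hi (hk h))]

/-- A family of KKT points of the problems S(t k) converging along `l` to a nondegenerate
T-stationary point of R. -/
structure ConvergingKKT (D : Setting n P Q) (l : Filter κ) (t : κ → ℝ) (X Y : κ → Vec n)
    (M : κ → SMult n P Q) (xb yb : Vec n) (Mb : TMult n P Q) : Prop where
  pos : ∀ k, 0 < t k
  kkt : ∀ k, KKTAt D (t k) (X k) (Y k) (M k)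
  tendsto_x : Tendsto X l (𝓝 xb)
  tendsto_y : Tendsto Y l (𝓝 yb)
  nondeg : NondegTStatAt D xb yb Mb

namespace ConvergingKKT

variable {D : Setting n P Q} {t : κ → ℝ} {X Y : κ → Vec n} {M : κ → SMult n P Q} {xb yb : Vec n}
  {Mb : TMult n P Q}

lemma kktEq (h : ConvergingKKT D l t X Y M xb yb Mb) (k : κ) :
    KKTEq D (t k) (X k) (Y k) (M k) := (h.kkt k).2.2.2.2.2.2.2.2

lemma tstatEq (h : ConvergingKKT D l t X Y M xb yb Mb) : TStatEq D xb yb Mb :=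
  h.nondeg.1.2.2.2.2.2.2

lemma mul_eq_zero_limit (h : ConvergingKKT D l t X Y M xb yb Mb) (i : Fin n) : xb i * yb i = 0 :=
  h.nondeg.1.1.2.2.2.1 i

lemma nonneg_limit (h : ConvergingKKT D l t X Y M xb yb Mb) (i : Fin n) : 0 ≤ yb i :=
  (h.nondeg.1.1.2.2.2.2 i).1

lemma linearIndepOn (h : ConvergingKKT D l t X Y M xb yb Mb) :
    LinearIndepOn ℝ (tiltedGrad D xb 0 0) (activeIdx D xb yb) :=
  h.nondeg.2.1.linearIndepOn h.nondeg.1.sum_eq h.nonneg_limit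

lemma eventually_Q0_subset (h : ConvergingKKT D l t X Y M xb yb Mb) :
    ∀ᶠ k in l, Q0 D (X k) ⊆ Q0 D xb := by
  have hg : Tendsto (fun k q => D.g q (X k)) l (𝓝 fun q => D.g q xb) :=
    tendsto_pi_nhds.mpr fun q => ((D.hg q).continuous.tendsto xb).comp h.tendsto_x
  filter_upwards [eventually_forall_ne_zero hg] with k hk q
  simpa [Q0] using not_imp_not.mp (hk q)

lemma eventually_Eact_subset (h : ConvergingKKT D l t X Y M xb yb Mb) :
    ∀ᶠ k in l, Eact D (Y k) ⊆ Eact D yb := by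
  have hy : Tendsto (fun k i => Y k i - (1 + D.ε)) l (𝓝 fun i => yb i - (1 + D.ε)) :=
    tendsto_pi_nhds.mpr fun i => (tendsto_pi_nhds.mp h.tendsto_y i).sub_const _
  filter_upwards [eventually_forall_ne_zero hy] with k hk i
  simpa [Eact, sub_eq_zero] using not_imp_not.mp (hk i)

lemma tendsto_gradCoeff (h : ConvergingKKT D l t X Y M xb yb Mb) {j : GradIdx n P Q}
    (hj : j ∈ activeIdx D xb yb) :
    Tendsto (fun k => gradCoeff (M k).lam (activeMu D (X k) (M k).mu1)
        (-(Eact D (Y k) : Set (Fin n)).indicator (M k).mu2) (M k).mu3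
        ((M k).xPart (t k) (X k) (Y k)) ((M k).yPart (t k) (X k) (Y k)) j) l
      (𝓝 (gradCoeff Mb.lam (activeMu D xb Mb.mu1) (-(Eact D yb : Set (Fin n)).indicator Mb.mu2)
        Mb.mu3 (Mb.xPart xb yb) (Mb.yPart xb yb) j)) := by
  have hyx : ∀ i, yb i * xb i = 0 := fun i => mul_comm (xb i) (yb i) ▸ h.mul_eq_zero_limit i
  refine tendsto_coeff_of_linearIndepOn h.linearIndepOn
    (tendsto_tiltedGrad h.tendsto_x (tendsto_ratio h.tendsto_x h.tendsto_y h.mul_eq_zero_limit)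
      (tendsto_ratio h.tendsto_y h.tendsto_x hyx)) ?_ hj
  rw [h.tstatEq.sum_gradCoeff_smul]
  refine ((((continuous_grad D.hf).tendsto xb).comp h.tendsto_x).prodMk_nhds
    (tendsto_const_nhds (x := D.c))).congr' ?_
  filter_upwards [h.eventually_Q0_subset, h.eventually_Eact_subset,
    eventually_forall_ne_zero h.tendsto_x, eventually_forall_ne_zero h.tendsto_y]
    with k hQ hE hx hy
  exact ((h.kktEq k).sum_gradCoeff_smul h.mul_eq_zero_limit hQ hE hx hy).symm

lemma tendsto_lam (h : ConvergingKKT D l t X Y M xb yb Mb) :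
    Tendsto (fun k => (M k).lam) l (𝓝 Mb.lam) :=
  tendsto_pi_nhds.mpr fun p => h.tendsto_gradCoeff (j := .inl p) (by simp [activeIdx])

lemma tendsto_mu (h : ConvergingKKT D l t X Y M xb yb Mb) :
    Tendsto (fun k => activeMu D (X k) (M k).mu1) l (𝓝 (activeMu D xb Mb.mu1)) := by
  refine tendsto_indicator_of_eventually_subset h.eventually_Q0_subset fun q hq => ?_
  simpa [gradCoeff, activeMu, hq] using
    h.tendsto_gradCoeff (j := .inr (.inl q)) (by simpa [activeIdx] using hq)

lemma tendsto_upper (h : ConvergingKKT D l t X Y M xb yb Mb) :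
    Tendsto (fun k => (Eact D (Y k) : Set (Fin n)).indicator (M k).mu2) l
      (𝓝 ((Eact D yb : Set (Fin n)).indicator Mb.mu2)) := by
  refine tendsto_indicator_of_eventually_subset h.eventually_Eact_subset fun i hi => ?_
  simpa [gradCoeff, hi] using
    (h.tendsto_gradCoeff (j := .inr (.inr (.inl i))) (by simpa [activeIdx] using hi)).neg

lemma tendsto_mu3 (h : ConvergingKKT D l t X Y M xb yb Mb) :
    Tendsto (fun k => (M k).mu3) l (𝓝 Mb.mu3) :=
  h.tendsto_gradCoeff (j := .inr (.inr (.inr (.inl ())))) (by simp [activeIdx])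

lemma tendsto_xPart (h : ConvergingKKT D l t X Y M xb yb Mb) :
    Tendsto (fun k => (M k).xPart (t k) (X k) (Y k)) l (𝓝 (Mb.xPart xb yb)) := by
  have hgrad : ∀ {φ : Vec n → ℝ}, ContDiff ℝ 2 φ →
      Tendsto (fun k => grad φ (X k)) l (𝓝 (grad φ xb)) :=
    fun hφ => ((continuous_grad hφ).tendsto xb).comp h.tendsto_x
  have hsum := (tendsto_finsetSum univ fun p _ =>
    (tendsto_pi_nhds.mp h.tendsto_lam p).smul (hgrad (D.hh p))).add
    (tendsto_finsetSum univ fun q _ => (tendsto_pi_nhds.mp h.tendsto_mu q).smul (hgrad (D.hg q)))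
  rw [eq_sub_of_add_eq' h.tstatEq.grad_eq.symm]
  simp only [fun k => eq_sub_of_add_eq' (h.kktEq k).grad_eq.symm]
  exact (hgrad D.hf).sub hsum

lemma tendsto_yPart (h : ConvergingKKT D l t X Y M xb yb Mb) :
    Tendsto (fun k => (M k).yPart (t k) (X k) (Y k)) l (𝓝 (Mb.yPart xb yb)) := by
  rw [eq_sub_of_add_eq' h.tstatEq.c_eq.symm]
  simp only [fun k => eq_sub_of_add_eq' (h.kktEq k).c_eq.symm]
  exact ((tendsto_pi_nhds.mpr fun _ => h.tendsto_mu3).sub h.tendsto_upper).const_sub D.c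

end ConvergingKKT

end Convergence

section TangentSpaces

open Module (finrank)
open LinearMap (BilinForm)

/-- The Euclidean inner product of ℝ²ⁿ as a bilinear form. -/
def pairing (n : ℕ) : BilinForm ℝ (Vec n × Vec n) :=
  (dotProductBilin ℝ ℝ).compl₁₂ (.fst ℝ _ _) (.fst ℝ _ _) +
    (dotProductBilin ℝ ℝ).compl₁₂ (.snd ℝ _ _) (.snd ℝ _ _)

lemma pairing_apply (ξ ζ : Vec n × Vec n) : pairing n ξ ζ = dot ξ.1 ζ.1 + dot ξ.2 ζ.2 := rfl

lemma pairing_nondegenerate : (pairing n).Nondegenerate := by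
  have hself : ∀ ξ, pairing n ξ ξ = 0 → ξ = 0 := fun ξ h => by
    have hnonneg : ∀ v : Vec n, 0 ≤ dot v v := fun v => sum_nonneg fun i _ => mul_self_nonneg (v i)
    have := (add_eq_zero_iff_of_nonneg (hnonneg ξ.1) (hnonneg ξ.2)).mp h
    exact Prod.ext (dotProduct_self_eq_zero.mp this.1) (dotProduct_self_eq_zero.mp this.2)
  exact ⟨fun ξ h => hself ξ (h ξ), fun ξ h => hself ξ (h ξ)⟩

variable {ι : Type*}

/-- The directions in ℝ²ⁿ orthogonal to the vectors `v j` with `j ∈ s`. -/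
def perp (v : ι → Vec n × Vec n) (s : Finset ι) : Submodule ℝ (Vec n × Vec n) :=
  (pairing n).orthogonal (.span ℝ (v '' s))

lemma mem_perp {v : ι → Vec n × Vec n} {s : Finset ι} {ξ : Vec n × Vec n} :
    ξ ∈ perp v s ↔ ∀ j ∈ s, pairing n (v j) ξ = 0 := by
  have hspan : ξ ∈ perp v s ↔ .span ℝ (v '' s) ≤ LinearMap.ker ((pairing n).flip ξ) := Iff.rfl
  rw [hspan, Submodule.span_le, Set.image_subset_iff]
  rfl

lemma finrank_perp_add_finrank_span (v : ι → Vec n × Vec n) (s : Finset ι) :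
    finrank ℝ (perp v s) + finrank ℝ (Submodule.span ℝ (v '' s)) = 2 * n := by
  have hle := (Submodule.span ℝ (v '' s)).finrank_le
  rw [perp, LinearMap.BilinForm.finrank_orthogonal pairing_nondegenerate]
  simp only [Module.finrank_prod, Module.finrank_fin_fun] at hle ⊢
  omega

lemma finrank_perp_add_card {v : ι → Vec n × Vec n} {s : Finset ι} (hv : LinearIndepOn ℝ v s) :
    finrank ℝ (perp v s) + #s = 2 * n := by
  have hspan := finrank_span_eq_card hv
  rw [← finrank_perp_add_finrank_span v s, Set.image_eq_range]
  simpa using hspan.symm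

lemma two_mul_le_finrank_perp_add_card (v : ι → Vec n × Vec n) (s : Finset ι) :
    2 * n ≤ finrank ℝ (perp v s) + #s := by
  have hspan := finrank_span_finset_le_card (R := ℝ) (s.image v)
  have hcard := s.card_image_le (f := v)
  rw [Finset.coe_image] at hspan
  have := finrank_perp_add_finrank_span v s
  unfold Set.finrank at hspan
  omega

lemma finrank_le_finrank_inf_perp_add_card (W : Submodule ℝ (Vec n × Vec n))
    (v : ι → Vec n × Vec n) (s : Finset ι) :
    finrank ℝ W ≤ finrank ℝ (W ⊓ perp v s : Submodule ℝ (Vec n × Vec n)) + #s := by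
  have hinf := finrank_add_le_finrank_add_finrank_inf (U := W) (V := perp v s) le_top le_top
  have hperp := two_mul_le_finrank_perp_add_card v s
  simp only [finrank_top, Module.finrank_prod, Module.finrank_fin_fun] at hinf
  omega

lemma dot_single_left (i : Fin n) (a : ℝ) (v : Vec n) : dot (Pi.single i a) v = a * v i :=
  single_dotProduct v a i

lemma pairing_ex (i : Fin n) (ξ : Vec n × Vec n) : pairing n (ex i) ξ = ξ.1 i := by
  rw [pairing_apply, ex, dot_single_left]
  simp [dot]

lemma pairing_ey (i : Fin n) (ξ : Vec n × Vec n) : pairing n (ey i) ξ = ξ.2 i := by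
  rw [pairing_apply, ey, dot_single_left]
  simp [dot]

lemma pairing_eAll (ξ : Vec n × Vec n) : pairing n eAll ξ = ∑ i, ξ.2 i := by
  simp [pairing_apply, eAll, dot]

lemma pairing_hvec (x y : Vec n) (i : Fin n) (ξ : Vec n × Vec n) :
    pairing n (hvec x y i) ξ = y i * ξ.1 i + x i * ξ.2 i := by
  simp [pairing_apply, hvec, dot_single_left]

lemma pairing_mk_zero (v : Vec n) (ξ : Vec n × Vec n) : pairing n (v, 0) ξ = dot v ξ.1 := by
  simp [pairing_apply, dot]

lemma mem_perp_ex {s : Finset (Fin n)} {ξ : Vec n × Vec n} :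
    ξ ∈ perp ex s ↔ ∀ i ∈ s, ξ.1 i = 0 := by
  simp only [mem_perp, pairing_ex]

variable {D : Setting n P Q} {x y : Vec n} {ξ : Vec n × Vec n}

/-- The tangent space T^R as a subspace. -/
def tangentR (D : Setting n P Q) (x y : Vec n) : Submodule ℝ (Vec n × Vec n) :=
  perp (tiltedGrad D x 0 0) (activeIdx D x y)

lemma mem_tangentR_iff : ξ ∈ tangentR D x y ↔ (∀ p, dot (grad (D.h p) x) ξ.1 = 0) ∧
    (∀ q ∈ Q0 D x, dot (grad (D.g q) x) ξ.1 = 0) ∧ (∀ i ∈ Eact D y, ξ.2 i = 0) ∧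
    (∑ i, ξ.2 i = 0) ∧ (∀ i ∈ Nact x, ξ.1 i = 0) ∧ ∀ i ∈ Nact y, ξ.2 i = 0 := by
  simp [tangentR, mem_perp, activeIdx, tiltedGrad, pairing_mk_zero, pairing_ex, pairing_ey,
    pairing_eAll]

lemma mem_tangentR_iff_inTR (hsum : ∑ i, y i = (n : ℝ) - D.s) (hy : ∀ i, 0 ≤ y i) :
    ξ ∈ tangentR D x y ↔ inTR D x y ξ := by
  rw [mem_tangentR_iff, inTR, Finset.union_comm (a00 x y), a01_union_a00 hy,
    Finset.union_comm (a00 x y), a10_union_a00, forall_prop_of_true hsum]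

/-- The gradients of the constraints of S(t). -/
def gradS (D : Setting n P Q) (x y : Vec n) : GradIdx n P Q → Vec n × Vec n :=
  Sum.elim (fun p => (grad (D.h p) x, 0)) <| Sum.elim (fun q => (grad (D.g q) x, 0)) <|
    Sum.elim ey <| Sum.elim (fun _ => eAll) <| Sum.elim (hvec x y) ey

/-- The indices of the active constraints of S(t). -/
def activeIdxS (D : Setting n P Q) (t : ℝ) (x y : Vec n) : Finset (GradIdx n P Q) :=
  univ.disjSum <| (Q0 D x).disjSum <| (Eact D y).disjSum <|
    (univ.filter fun _ => ∑ i, y i = (n : ℝ) - D.s).disjSum <| (Hact t x y).disjSum (Nact y)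

/-- The tangent space T^S as a subspace. -/
def tangentS (D : Setting n P Q) (t : ℝ) (x y : Vec n) : Submodule ℝ (Vec n × Vec n) :=
  perp (gradS D x y) (activeIdxS D t x y)

lemma mem_tangentS_iff_inTS {t : ℝ} : ξ ∈ tangentS D t x y ↔ inTS D t x y ξ := by
  simp [tangentS, inTS, mem_perp, activeIdxS, gradS, pairing_mk_zero, pairing_ey, pairing_eAll,
    pairing_hvec, -univ_unique, -Finset.filter_const]

lemma QIdx_eq_sigNeg (D : Setting n P Q) (t : ℝ) (x y : Vec n) (M : SMult n P Q) :
    QIdx D t x y M = sigNeg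
      ((hessForm (LagS D t x y M) (x, y)).toQuadraticMap.restrict (tangentS D t x y)) := by
  rw [← negIndex_hess_eq_sigNeg (contDiff_LagS D t x y M), QIdx,
    show inTS D t x y = (· ∈ tangentS D t x y) from
      funext fun ξ => propext mem_tangentS_iff_inTS.symm]

lemma TStatAt.TIndex_eq_sigNeg {M : TMult n P Q} (h : TStatAt D x y M) :
    TIndex D x y M = sigNeg
      ((hessForm (LagR D x y M) (x, y)).toQuadraticMap.restrict (tangentR D x y)) +
        #(a00 x y) := by
  rw [← negIndex_hess_eq_sigNeg (contDiff_LagR D x y M), TIndex,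
    show inTR D x y = (· ∈ tangentR D x y) from
      funext fun ξ => propext (mem_tangentR_iff_inTR h.sum_eq fun i => (h.1.2.2.2.2 i).1).symm]

lemma NondegTStatAt.sigPos_add_sigNeg_eq_finrank_tangentR {M : TMult n P Q}
    (h : NondegTStatAt D x y M) :
    sigPos
        ((hessForm (LagR D x y M) (x, y)).toQuadraticMap.restrict (tangentR D x y)) +
      sigNeg
        ((hessForm (LagR D x y M) (x, y)).toQuadraticMap.restrict (tangentR D x y)) =
      finrank ℝ (tangentR D x y) := by
  have hmem : ∀ {ξ}, ξ ∈ tangentR D x y ↔ inTR D x y ξ :=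
    mem_tangentR_iff_inTR h.1.sum_eq fun i => (h.1.1.2.2.2.2 i).1
  have hsymm := hessForm_isSymm (contDiff_LagR D x y M) (x, y)
  refine sigPos_add_sigNeg_eq_finrank _ hsymm fun ξ hξ h0 => ?_
  refine h.2.2.2.2.2.2 ξ (hmem.mp hξ) fun ζ hζ => ?_
  rw [hess_eq_hessForm (contDiff_LagR D x y M), hsymm.eq]
  exact h0 ζ (hmem.mpr hζ)

end TangentSpaces

section ActiveSets

variable {κ : Type*} {l : Filter κ} {D : Setting n P Q}

lemma mem_Hact_of_eta_ne_zero {P Q : Type*} {M : SMult n P Q} {t : ℝ} {x y : Vec n} {i : Fin n}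
    (h : eta t x y M i ≠ 0) : i ∈ Hact t x y := by
  contrapose! h
  simp only [Hact, mem_union, not_or] at h
  simp [eta, h]

lemma ne_zero_of_mem_Hact {t : ℝ} (ht : 0 < t) {x y : Vec n} {i : Fin n} (hi : i ∈ Hact t x y) :
    x i ≠ 0 ∧ y i ≠ 0 := by
  have hxy : x i * y i ≠ 0 := by
    simp only [Hact, Hge, Hle, mem_union, mem_filter_univ] at hi
    rcases hi with hi | hi
    · exact hi ▸ neg_ne_zero.mpr ht.ne'
    · exact hi ▸ ht.ne'
  exact mul_ne_zero_iff.mp hxy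

lemma disjoint_Hact_Nact {t : ℝ} (ht : 0 < t) (x y : Vec n) :
    Disjoint (Hact t x y) (Nact y) :=
  Finset.disjoint_left.mpr fun _ hH hN =>
    (ne_zero_of_mem_Hact ht hH).2 (Finset.mem_filter.mp hN).2

lemma card_Nact_add_card_Nact {x y : Vec n} (hxy : ∀ i, x i * y i = 0) :
    #(Nact x) + #(Nact y) = n + #(a00 x y) := by
  have hunion : Nact x ∪ Nact y = univ := by
    ext i
    simpa [Nact] using hxy i
  have hinter : Nact x ∩ Nact y = a00 x y := by
    ext i
    simp [Nact, a00]
  rw [← Finset.card_union_add_card_inter, hunion, hinter, card_fin]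

namespace ConvergingKKT

variable {t : κ → ℝ} {X Y : κ → Vec n} {M : κ → SMult n P Q} {xb yb : Vec n} {Mb : TMult n P Q}

lemma eventually_Q0_eq (h : ConvergingKKT D l t X Y M xb yb Mb) :
    ∀ᶠ k in l, Q0 D (X k) = Q0 D xb := by
  filter_upwards [h.eventually_Q0_subset, eventually_forall_ne_zero h.tendsto_mu] with k hsub hmu
  refine hsub.antisymm fun q hq => Set.mem_of_indicator_ne_zero (hmu q ?_)
  simpa [activeMu, hq] using (h.nondeg.2.2.1 q hq).ne'

lemma eventually_Eact_eq (h : ConvergingKKT D l t X Y M xb yb Mb) :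
    ∀ᶠ k in l, Eact D (Y k) = Eact D yb := by
  filter_upwards [h.eventually_Eact_subset, eventually_forall_ne_zero h.tendsto_upper]
    with k hsub hmu
  refine hsub.antisymm fun i hi => Set.mem_of_indicator_ne_zero (hmu i ?_)
  simpa [hi] using (h.nondeg.2.2.2.1 i hi).ne'

lemma eventually_sum_eq (h : ConvergingKKT D l t X Y M xb yb Mb) :
    ∀ᶠ k in l, ∑ i, Y k i = (n : ℝ) - D.s := by
  filter_upwards [h.tendsto_mu3.eventually_ne (h.nondeg.2.2.2.2.1 h.nondeg.1.sum_eq).ne']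
    with k hmu
  exact sub_eq_zero.mp ((mul_eq_zero.mp (h.kkt k).2.2.2.2.1).resolve_left hmu)

lemma eventually_mem_Hact (h : ConvergingKKT D l t X Y M xb yb Mb) :
    ∀ᶠ k in l, ∀ i, Mb.xPart xb yb i ≠ 0 → i ∈ Hact (t k) (X k) (Y k) := by
  filter_upwards [eventually_forall_ne_zero h.tendsto_xPart] with k hk i hi
  exact mem_Hact_of_eta_ne_zero (left_ne_zero_of_mul (hk i hi))

lemma eventually_a00_subset_Hact (h : ConvergingKKT D l t X Y M xb yb Mb) :
    ∀ᶠ k in l, a00 xb yb ⊆ Hact (t k) (X k) (Y k) := by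
  filter_upwards [h.eventually_mem_Hact] with k hk i hi using hk i (h.nondeg.xPart_ne_zero hi)

lemma eventually_mem_Hact_or_mem_Nact (h : ConvergingKKT D l t X Y M xb yb Mb) :
    ∀ᶠ k in l, ∀ i, yb i = 0 → i ∈ Hact (t k) (X k) (Y k) ∨ i ∈ Nact (Y k) := by
  filter_upwards [eventually_forall_ne_zero h.tendsto_yPart] with k hk i hi
  by_contra! hmem
  have heta : eta (t k) (X k) (Y k) (M k) i = 0 := not_imp_comm.mp mem_Hact_of_eta_ne_zero hmem.1
  exact hk i (h.nondeg.yPart_ne_zero hi) (by simp [SMult.yPart, heta, hmem.2])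

-- The sets `Hact`, `Nact` and `a01 \ Hact` are disjoint, so together they have at most `n`
-- elements, whereas `a00` is counted twice among the active coordinates of R.
lemma eventually_finrank_tangentR_add_le (h : ConvergingKKT D l t X Y M xb yb Mb) :
    ∀ᶠ k in l, Module.finrank ℝ (tangentR D xb yb) + #(a00 xb yb) +
      #(a01 xb yb \ Hact (t k) (X k) (Y k)) ≤
        Module.finrank ℝ (tangentS D (t k) (X k) (Y k)) := by
  filter_upwards [h.eventually_Q0_eq, h.eventually_Eact_eq,
    eventually_forall_ne_zero h.tendsto_y] with k hQ hE hy
  have hR : Module.finrank ℝ (tangentR D xb yb) + #(activeIdx D xb yb) = 2 * n :=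
    finrank_perp_add_card h.linearIndepOn
  have hS : 2 * n ≤ Module.finrank ℝ (tangentS D (t k) (X k) (Y k)) +
      #(activeIdxS D (t k) (X k) (Y k)) := two_mul_le_finrank_perp_add_card _ _
  have hcard := card_Nact_add_card_Nact h.mul_eq_zero_limit
  have hdisj : Disjoint (Nact (Y k)) (a01 xb yb \ Hact (t k) (X k) (Y k)) :=
    Finset.disjoint_left.mpr fun i hN ha => by
      simp only [Nact, a01, Finset.mem_sdiff, mem_filter_univ] at hN ha
      exact hy i ha.1.2.ne' hN
  have hle := Finset.card_le_univ
    (Hact (t k) (X k) (Y k) ∪ Nact (Y k) ∪ a01 xb yb \ Hact (t k) (X k) (Y k))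
  rw [Finset.card_union_of_disjoint (Finset.disjoint_union_left.mpr
      ⟨Finset.disjoint_sdiff, hdisj⟩),
    Finset.card_union_of_disjoint (disjoint_Hact_Nact (h.pos k) _ _), Fintype.card_fin] at hle
  have hunit : #(univ.filter fun _ : Unit => ∑ i, Y k i = (n : ℝ) - D.s) ≤ 1 :=
    Finset.card_le_univ _
  simp only [activeIdx, activeIdxS, Finset.card_disjSum, hQ, hE, card_univ,
    Fintype.card_unit] at hR hS
  omega

end ConvergingKKT

end ActiveSets

section LimitDirections

variable {κ : Type*} {l : Filter κ} {D : Setting n P Q}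

/-- The contribution of the constraints on `x i * y i` to the Hessian of the Lagrange function
of S(t) in direction `ξ`, up to the factor `-2`. -/
def crossTerm {P Q : Type*} (t : ℝ) (x y : Vec n) (M : SMult n P Q) (ξ : Vec n × Vec n)
    (i : Fin n) : ℝ :=
  eta t x y M i * (ξ.1 i * ξ.2 i)

section

variable {t : ℝ} {x y : Vec n} {M : SMult n P Q} {ξ : Vec n × Vec n} {i : Fin n}

lemma crossTerm_mul_y {P Q : Type*} {M : SMult n P Q} :
    crossTerm t x y M ξ i * y i = M.xPart t x y i * (ξ.1 i * ξ.2 i) := by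
  simp only [crossTerm, SMult.xPart, Pi.mul_apply]
  ring

lemma crossTerm_mul_x (hξ : ξ ∈ tangentS D t x y) :
    crossTerm t x y M ξ i * x i = M.yPart t x y i * (ξ.1 i * ξ.2 i) := by
  by_cases hi : i ∈ Nact y
  · simp [crossTerm, (mem_tangentS_iff_inTS.mp hξ).2.2.2.2.2 i hi]
  · simp only [crossTerm, SMult.yPart, Pi.add_apply, Pi.mul_apply,
      Set.indicator_of_notMem (Finset.mem_coe.not.mpr hi)]
    ring

lemma y_mul_crossTerm_of_mem_Hact (hξ : ξ ∈ tangentS D t x y) (hi : i ∈ Hact t x y) :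
    y i * crossTerm t x y M ξ i = -M.yPart t x y i * ξ.2 i ^ 2 := by
  have hH := (mem_tangentS_iff_inTS.mp hξ).2.2.2.2.1 i hi
  by_cases hN : i ∈ Nact y
  · simp [crossTerm, (mem_tangentS_iff_inTS.mp hξ).2.2.2.2.2 i hN]
  · simp only [crossTerm, SMult.yPart, Pi.add_apply, Pi.mul_apply,
      Set.indicator_of_notMem (Finset.mem_coe.not.mpr hN)]
    linear_combination eta t x y M i * ξ.2 i * hH

lemma x_mul_crossTerm_of_mem_Hact (hξ : ξ ∈ tangentS D t x y) (hi : i ∈ Hact t x y) :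
    x i * crossTerm t x y M ξ i = -(M.xPart t x y i * ξ.1 i ^ 2) := by
  have hH := (mem_tangentS_iff_inTS.mp hξ).2.2.2.2.1 i hi
  simp only [crossTerm, SMult.xPart, Pi.mul_apply]
  linear_combination eta t x y M i * ξ.1 i * hH

end

/-- Tangent directions `ξ k` of S(t k) converging along `l`, where each direction satisfies
`(ξ k).1 i = 0` for those `i ∈ a01` at which the constraint on `x i * y i` is inactive. -/
structure ConvergingTangent (D : Setting n P Q) (l : Filter κ) (t : κ → ℝ) (X Y : κ → Vec n)
    (xb yb : Vec n) (ξ : κ → Vec n × Vec n) (ξ₀ : Vec n × Vec n) : Prop where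
  mem : ∀ᶠ k in l, ξ k ∈ tangentS D (t k) (X k) (Y k)
  tendsto : Tendsto ξ l (𝓝 ξ₀)
  mem_Hact_or_fst_eq_zero : ∀ᶠ k in l, ∀ i ∈ a01 xb yb, i ∈ Hact (t k) (X k) (Y k) ∨ (ξ k).1 i = 0

namespace ConvergingTangent

variable {t : κ → ℝ} {X Y : κ → Vec n} {M : κ → SMult n P Q} {xb yb : Vec n} {Mb : TMult n P Q}
  {ξ : κ → Vec n × Vec n} {ξ₀ : Vec n × Vec n} {i : Fin n}

lemma tendsto_fst (hξ : ConvergingTangent D l t X Y xb yb ξ ξ₀) (i : Fin n) :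
    Tendsto (fun k => (ξ k).1 i) l (𝓝 (ξ₀.1 i)) :=
  tendsto_pi_nhds.mp ((continuous_fst.tendsto ξ₀).comp hξ.tendsto) i

lemma tendsto_snd (hξ : ConvergingTangent D l t X Y xb yb ξ ξ₀) (i : Fin n) :
    Tendsto (fun k => (ξ k).2 i) l (𝓝 (ξ₀.2 i)) :=
  tendsto_pi_nhds.mp ((continuous_snd.tendsto ξ₀).comp hξ.tendsto) i

lemma tendsto_hvec (hξ : ConvergingTangent D l t X Y xb yb ξ ξ₀)
    (h : ConvergingKKT D l t X Y M xb yb Mb) (i : Fin n) :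
    Tendsto (fun k => Y k i * (ξ k).1 i + X k i * (ξ k).2 i) l
      (𝓝 (yb i * ξ₀.1 i + xb i * ξ₀.2 i)) :=
  ((tendsto_pi_nhds.mp h.tendsto_y i).mul (hξ.tendsto_fst i)).add
    ((tendsto_pi_nhds.mp h.tendsto_x i).mul (hξ.tendsto_snd i))

lemma fst_eq_zero [l.NeBot] (hξ : ConvergingTangent D l t X Y xb yb ξ ξ₀)
    (h : ConvergingKKT D l t X Y M xb yb Mb) (hi : yb i ≠ 0) : ξ₀.1 i = 0 := by
  have hx : xb i = 0 := (mul_eq_zero.mp (h.mul_eq_zero_limit i)).resolve_right hi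
  have hmem : i ∈ a01 xb yb := by
    simpa [a01, hx] using (h.nonneg_limit i).lt_of_ne' hi
  have hzero : ∀ᶠ k in l, 0 = (Y k i * (ξ k).1 i + X k i * (ξ k).2 i) * (ξ k).1 i := by
    filter_upwards [hξ.mem, hξ.mem_Hact_or_fst_eq_zero] with k hT ha01
    rcases ha01 i hmem with hH | h0
    · rw [(mem_tangentS_iff_inTS.mp hT).2.2.2.2.1 i hH, zero_mul]
    · rw [h0, mul_zero]
  have hlim := tendsto_nhds_unique_of_eventuallyEq tendsto_const_nhds
    ((hξ.tendsto_hvec h i).mul (hξ.tendsto_fst i)) hzero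
  simpa [hx, hi] using hlim

lemma snd_eq_zero [l.NeBot] (hξ : ConvergingTangent D l t X Y xb yb ξ ξ₀)
    (h : ConvergingKKT D l t X Y M xb yb Mb) (hi : xb i ≠ 0) : ξ₀.2 i = 0 := by
  have hy : yb i = 0 := (mul_eq_zero.mp (h.mul_eq_zero_limit i)).resolve_left hi
  have hzero : ∀ᶠ k in l, 0 = (Y k i * (ξ k).1 i + X k i * (ξ k).2 i) * (ξ k).2 i := by
    filter_upwards [hξ.mem, h.eventually_mem_Hact_or_mem_Nact] with k hT hHN
    rcases hHN i hy with hH | hN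
    · rw [(mem_tangentS_iff_inTS.mp hT).2.2.2.2.1 i hH, zero_mul]
    · rw [(mem_tangentS_iff_inTS.mp hT).2.2.2.2.2 i hN, mul_zero]
  have hlim := tendsto_nhds_unique_of_eventuallyEq tendsto_const_nhds
    ((hξ.tendsto_hvec h i).mul (hξ.tendsto_snd i)) hzero
  simpa [hy, hi] using hlim

lemma dot_grad_eq_zero [l.NeBot] (hξ : ConvergingTangent D l t X Y xb yb ξ ξ₀)
    (hx : Tendsto X l (𝓝 xb)) {φ : Vec n → ℝ} (hφ : ContDiff ℝ 2 φ)
    (h0 : ∀ᶠ k in l, dot (grad φ (X k)) (ξ k).1 = 0) : dot (grad φ xb) ξ₀.1 = 0 :=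
  tendsto_nhds_unique_of_eventuallyEq
    (tendsto_finsetSum _ fun i _ =>
      (tendsto_pi_nhds.mp (((continuous_grad hφ).tendsto xb).comp hx) i).mul (hξ.tendsto_fst i))
    tendsto_const_nhds h0

lemma mem_tangentR [l.NeBot] (hξ : ConvergingTangent D l t X Y xb yb ξ ξ₀)
    (h : ConvergingKKT D l t X Y M xb yb Mb)
    (h00 : ∀ i ∈ a00 xb yb, ξ₀.1 i = 0 ∧ ξ₀.2 i = 0) : ξ₀ ∈ tangentR D xb yb := by
  have hT := hξ.mem.mono fun k hk => mem_tangentS_iff_inTS.mp hk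
  refine mem_tangentR_iff.mpr ⟨fun p => ?_, fun q hq => ?_, fun i hi => ?_, ?_, fun i hi => ?_,
    fun i hi => ?_⟩
  · exact hξ.dot_grad_eq_zero h.tendsto_x (D.hh p) (hT.mono fun k hk => hk.1 p)
  · refine hξ.dot_grad_eq_zero h.tendsto_x (D.hg q) ?_
    filter_upwards [hT, h.eventually_Q0_eq] with k hk hQ using hk.2.1 q (hQ ▸ hq)
  · refine tendsto_nhds_unique_of_eventuallyEq (hξ.tendsto_snd i) tendsto_const_nhds ?_
    filter_upwards [hT, h.eventually_Eact_eq] with k hk hE using hk.2.2.1 i (hE ▸ hi)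
  · refine tendsto_nhds_unique_of_eventuallyEq (tendsto_finsetSum _ fun i _ => hξ.tendsto_snd i)
      tendsto_const_nhds ?_
    filter_upwards [hT, h.eventually_sum_eq] with k hk hsum using hk.2.2.2.1 hsum
  · by_cases hy : yb i = 0
    · exact (h00 i (by simp_all [Nact, a00])).1
    · exact hξ.fst_eq_zero h hy
  · by_cases hx : xb i = 0
    · exact (h00 i (by simp_all [Nact, a00])).2
    · exact hξ.snd_eq_zero h hx

lemma tendsto_crossTerm [l.NeBot] (hξ : ConvergingTangent D l t X Y xb yb ξ ξ₀)
    (h : ConvergingKKT D l t X Y M xb yb Mb) (hi : i ∉ a00 xb yb) :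
    Tendsto (fun k => crossTerm (t k) (X k) (Y k) (M k) (ξ k) i) l (𝓝 0) := by
  have hx := tendsto_pi_nhds.mp h.tendsto_x i
  have hy := tendsto_pi_nhds.mp h.tendsto_y i
  have hprod := (hξ.tendsto_fst i).mul (hξ.tendsto_snd i)
  by_cases hyi : yb i = 0
  · have hxi : xb i ≠ 0 := fun hxi => hi (by simp [a00, hxi, hyi])
    have hlim := ((tendsto_pi_nhds.mp h.tendsto_yPart i).mul hprod).div hx hxi
    rw [hξ.snd_eq_zero h hxi, mul_zero, mul_zero, zero_div] at hlim
    refine hlim.congr' ?_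
    filter_upwards [hξ.mem, hx.eventually_ne hxi] with k hT hne
    exact ((eq_div_iff hne).mpr (crossTerm_mul_x hT)).symm
  · have hlim := ((tendsto_pi_nhds.mp h.tendsto_xPart i).mul hprod).div hy hyi
    rw [hξ.fst_eq_zero h hyi, zero_mul, mul_zero, zero_div] at hlim
    refine hlim.congr' ?_
    filter_upwards [hy.eventually_ne hyi] with k hne
    exact ((eq_div_iff hne).mpr crossTerm_mul_y).symm

lemma tendsto_hessForm [l.NeBot] (hξ : ConvergingTangent D l t X Y xb yb ξ ξ₀)
    (h : ConvergingKKT D l t X Y M xb yb Mb) :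
    Tendsto (fun k => hessForm (LagS D (t k) (X k) (Y k) (M k)) (X k, Y k) (ξ k) (ξ k) +
        2 * ∑ i ∈ a00 xb yb, crossTerm (t k) (X k) (Y k) (M k) (ξ k) i) l
      (𝓝 (hessForm (LagR D xb yb Mb) (xb, yb) ξ₀ ξ₀)) := by
  have hcross : Tendsto (fun k => ∑ i ∈ (a00 xb yb)ᶜ,
      crossTerm (t k) (X k) (Y k) (M k) (ξ k) i) l (𝓝 0) := by
    simpa only [Finset.sum_const_zero] using
      tendsto_finsetSum _ fun i hi => hξ.tendsto_crossTerm h (Finset.mem_compl.mp hi)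
  have hlim := (tendsto_xHess D h.tendsto_lam h.tendsto_mu h.tendsto_x
    ((continuous_fst.tendsto ξ₀).comp hξ.tendsto)).sub (hcross.const_mul 2)
  rw [mul_zero, sub_zero] at hlim
  rw [hessForm_LagR]
  refine hlim.congr fun k => ?_
  have hsplit := Finset.sum_add_sum_compl (a00 xb yb) (crossTerm (t k) (X k) (Y k) (M k) (ξ k))
  simp only [hessForm_LagS, ← crossTerm.eq_def, ← hsplit, Function.comp_apply]
  ring

lemma mem_tangentR_and_hessForm_nonpos [l.NeBot]
    (hξ : ConvergingTangent D l t X Y xb yb ξ ξ₀) (h : ConvergingKKT D l t X Y M xb yb Mb)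
    (h00 : ∀ᶠ k in l, ∀ i ∈ a00 xb yb, (ξ k).1 i = 0)
    (hneg : ∀ᶠ k in l,
      hessForm (LagS D (t k) (X k) (Y k) (M k)) (X k, Y k) (ξ k) (ξ k) ≤ 0) :
    ξ₀ ∈ tangentR D xb yb ∧ hessForm (LagR D xb yb Mb) (xb, yb) ξ₀ ξ₀ ≤ 0 := by
  have hsnd : ∀ᶠ k in l, ∀ i ∈ a00 xb yb, (ξ k).2 i = 0 := by
    filter_upwards [hξ.mem, h00, h.eventually_a00_subset_Hact] with k hT h1 hsub i hi
    have hH := (mem_tangentS_iff_inTS.mp hT).2.2.2.2.1 i (hsub hi)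
    rw [h1 i hi, mul_zero, zero_add] at hH
    exact (mul_eq_zero.mp hH).resolve_left (ne_zero_of_mem_Hact (h.pos k) (hsub hi)).1
  refine ⟨hξ.mem_tangentR h fun i hi => ⟨?_, ?_⟩, le_of_tendsto (hξ.tendsto_hessForm h) ?_⟩
  · exact tendsto_nhds_unique_of_eventuallyEq (hξ.tendsto_fst i) tendsto_const_nhds
      (h00.mono fun k hk => hk i hi)
  · exact tendsto_nhds_unique_of_eventuallyEq (hξ.tendsto_snd i) tendsto_const_nhds
      (hsnd.mono fun k hk => hk i hi)
  · filter_upwards [h00, hneg] with k h1 hk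
    have hzero : ∑ i ∈ a00 xb yb, crossTerm (t k) (X k) (Y k) (M k) (ξ k) i = 0 :=
      Finset.sum_eq_zero fun i hi => by rw [crossTerm, h1 i hi, zero_mul, mul_zero]
    rwa [hzero, mul_zero, add_zero]

lemma eventually_crossTerm_nonneg (hξ : ConvergingTangent D l t X Y xb yb ξ ξ₀)
    (h : ConvergingKKT D l t X Y M xb yb Mb) (hi : i ∈ a00 xb yb) :
    ∀ᶠ k in l, 0 ≤ crossTerm (t k) (X k) (Y k) (M k) (ξ k) i := by
  filter_upwards [hξ.mem, h.eventually_a00_subset_Hact,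
    (tendsto_pi_nhds.mp h.tendsto_yPart i).eventually_lt_const (h.nondeg.yPart_neg hi)]
    with k hT hsub hneg
  have hY : 0 < Y k i := ((h.kkt k).1.2.2.2.2 i).1.lt_of_ne'
    (ne_zero_of_mem_Hact (h.pos k) (hsub hi)).2
  refine nonneg_of_mul_nonneg_right ?_ hY
  rw [y_mul_crossTerm_of_mem_Hact hT (hsub hi)]
  exact mul_nonneg (neg_nonneg.mpr hneg.le) (sq_nonneg _)

lemma isBoundedUnder_crossTerm [l.NeBot] (hξ : ConvergingTangent D l t X Y xb yb ξ ξ₀)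
    (h : ConvergingKKT D l t X Y M xb yb Mb)
    (hpos : ∀ᶠ k in l,
      0 ≤ hessForm (LagS D (t k) (X k) (Y k) (M k)) (X k, Y k) (ξ k) (ξ k))
    (hi : i ∈ a00 xb yb) :
    IsBoundedUnder (· ≤ ·) l fun k => ‖crossTerm (t k) (X k) (Y k) (M k) (ξ k) i‖ := by
  have hcross : ∀ᶠ k in l, ∀ i ∈ a00 xb yb, 0 ≤ crossTerm (t k) (X k) (Y k) (M k) (ξ k) i :=
    (Filter.eventually_all_finset _).mpr fun i hi => hξ.eventually_crossTerm_nonneg h hi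
  refine isBoundedUnder_of_eventually_le
    (a := hessForm (LagR D xb yb Mb) (xb, yb) ξ₀ ξ₀ + 1) ?_
  filter_upwards [hcross, hpos, (hξ.tendsto_hessForm h).eventually_lt_const (lt_add_one _)]
    with k hnonneg hk hlt
  rw [Real.norm_of_nonneg (hnonneg i hi)]
  linarith [Finset.single_le_sum hnonneg hi, Finset.sum_nonneg hnonneg]

-- At a biactive index `rho2 < 0` makes `crossTerm` nonnegative, and nonnegativity of the Hessian of
-- L^S bounds it above. Hence `x i * crossTerm` and `y i * crossTerm` tend to 0, while by
-- convergence of the multipliers they tend to `-rho1 * ξ₀.1 i ^ 2` and `-rho2 * ξ₀.2 i ^ 2`.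
lemma mem_tangentR_and_hessForm_nonneg [l.NeBot]
    (hξ : ConvergingTangent D l t X Y xb yb ξ ξ₀) (h : ConvergingKKT D l t X Y M xb yb Mb)
    (hpos : ∀ᶠ k in l,
      0 ≤ hessForm (LagS D (t k) (X k) (Y k) (M k)) (X k, Y k) (ξ k) (ξ k)) :
    ξ₀ ∈ tangentR D xb yb ∧ 0 ≤ hessForm (LagR D xb yb Mb) (xb, yb) ξ₀ ξ₀ := by
  refine ⟨hξ.mem_tangentR h fun i hi => ⟨?_, ?_⟩, ge_of_tendsto (hξ.tendsto_hessForm h) ?_⟩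
  · have hx : Tendsto (X · i) l (𝓝 0) := by
      simpa [(Finset.mem_filter.mp hi).2.1] using tendsto_pi_nhds.mp h.tendsto_x i
    have hlim := tendsto_nhds_unique_of_eventuallyEq
      (hx.zero_mul_isBoundedUnder_le (hξ.isBoundedUnder_crossTerm h hpos hi))
      (((tendsto_pi_nhds.mp h.tendsto_xPart i).mul ((hξ.tendsto_fst i).pow 2)).neg) (by
        filter_upwards [hξ.mem, h.eventually_a00_subset_Hact] with k hT hsub
        exact x_mul_crossTerm_of_mem_Hact hT (hsub hi))
    simpa [h.nondeg.xPart_ne_zero hi] using hlim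
  · have hy : Tendsto (Y · i) l (𝓝 0) := by
      simpa [(Finset.mem_filter.mp hi).2.2] using tendsto_pi_nhds.mp h.tendsto_y i
    have hlim := tendsto_nhds_unique_of_eventuallyEq
      (hy.zero_mul_isBoundedUnder_le (hξ.isBoundedUnder_crossTerm h hpos hi))
      (((tendsto_pi_nhds.mp h.tendsto_yPart i).neg.mul ((hξ.tendsto_snd i).pow 2))) (by
        filter_upwards [hξ.mem, h.eventually_a00_subset_Hact] with k hT hsub
        exact y_mul_crossTerm_of_mem_Hact hT (hsub hi))
    simpa [(h.nondeg.yPart_neg hi).ne] using hlim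
  · filter_upwards [hpos, (Filter.eventually_all_finset _).mpr fun i hi =>
      hξ.eventually_crossTerm_nonneg h hi] with k hk hcross
    linarith [Finset.sum_nonneg hcross]

end ConvergingTangent

end LimitDirections

section IndexBounds

open Module (finrank)

namespace ConvergingKKT

variable {κ : Type*} {D : Setting n P Q} {t : κ → ℝ} {X Y : κ → Vec n} {M : κ → SMult n P Q}
  {xb yb : Vec n} {Mb : TMult n P Q}

-- Removing the components `ξ.1 i` at biactive indices and at the indices `i ∈ a01` with
-- `sig1 i = 0` from the nonpositive directions of L^S leaves directions whose limits are
-- nonpositive for L^R.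
theorem eventually_QIdx_le {l : Ultrafilter κ} (h : ConvergingKKT D l t X Y M xb yb Mb) :
    ∀ᶠ k in l, QIdx D (t k) (X k) (Y k) (M k) ≤
      TIndex D xb yb Mb + #((a01 xb yb).filter fun i => Mb.sig1 i = 0) := by
  set Z := (a01 xb yb).filter fun i => Mb.sig1 i = 0
  choose W hWT hWrank hWneg using fun k => exists_nonpos_and_finrank_eq_sigNeg
    (hessForm (LagS D (t k) (X k) (Y k) (M k)) (X k, Y k)).toQuadraticMap
    (tangentS D (t k) (X k) (Y k))
  have hrank := eventually_finrank_add_sigPos_le l (fun k => W k ⊓ perp ex (a00 xb yb ∪ Z))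
    (tangentR D xb yb) (hessForm (LagR D xb yb Mb) (xb, yb)).toQuadraticMap
    fun ξ ξ₀ hξ hconv => by
      have hzero : ∀ᶠ k in l, ∀ i ∈ a00 xb yb ∪ Z, (ξ k).1 i = 0 :=
        hξ.mono fun k hk => mem_perp_ex.mp hk.2
      refine ConvergingTangent.mem_tangentR_and_hessForm_nonpos (M := M)
        ⟨hξ.mono fun k hk => hWT k hk.1, hconv, ?_⟩ h
        (hzero.mono fun k hk i hi => hk i (mem_union_left _ hi))
        (hξ.mono fun k hk => hWneg k _ hk.1)
      filter_upwards [hzero, h.eventually_mem_Hact] with k hk hH i hi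
      refine or_iff_not_imp_right.mpr fun hi0 => hH i ?_
      have hi00 : i ∉ a00 xb yb := fun h00 => hi0 (hk i (mem_union_left _ h00))
      have hsig : Mb.sig1 i ≠ 0 := fun hs =>
        hi0 (hk i (mem_union_right _ (Finset.mem_filter.mpr ⟨hi, hs⟩)))
      simpa [TMult.xPart, hi, hi00] using hsig
  have hnondeg := h.nondeg.sigPos_add_sigNeg_eq_finrank_tangentR
  filter_upwards [hrank] with k hk
  have hW := finrank_le_finrank_inf_perp_add_card (W k) ex (a00 xb yb ∪ Z)
  have hcard := card_union_le (a00 xb yb) Z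
  rw [h.nondeg.1.TIndex_eq_sigNeg, QIdx_eq_sigNeg]
  rw [hWrank] at hW
  omega

theorem eventually_TIndex_le {l : Ultrafilter κ} (h : ConvergingKKT D l t X Y M xb yb Mb) :
    ∀ᶠ k in l, TIndex D xb yb Mb ≤ QIdx D (t k) (X k) (Y k) (M k) := by
  choose W hWT hWrank hWpos using fun k => exists_nonneg_and_finrank_add_sigNeg
    (hessForm (LagS D (t k) (X k) (Y k) (M k)) (X k, Y k)).toQuadraticMap
    (tangentS D (t k) (X k) (Y k))
  have hrank := eventually_finrank_add_sigPos_le l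
    (fun k => W k ⊓ perp ex (a01 xb yb \ Hact (t k) (X k) (Y k)))
    (tangentR D xb yb) (-(hessForm (LagR D xb yb Mb) (xb, yb)).toQuadraticMap)
    fun ξ ξ₀ hξ hconv => by
      have hlim := ConvergingTangent.mem_tangentR_and_hessForm_nonneg (M := M)
        ⟨hξ.mono fun k hk => hWT k hk.1, hconv, ?_⟩ h (hξ.mono fun k hk => hWpos k _ hk.1)
      · exact hlim.imp_right neg_nonpos.mpr
      filter_upwards [hξ] with k hk i hi
      exact or_iff_not_imp_left.mpr fun hH =>
        mem_perp_ex.mp hk.2 i (Finset.mem_sdiff.mpr ⟨hi, hH⟩)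
  filter_upwards [hrank, h.eventually_finrank_tangentR_add_le] with k hk hdim
  have hsig : sigPos ((-(hessForm (LagR D xb yb Mb) (xb, yb)).toQuadraticMap).restrict
      (tangentR D xb yb)) = sigNeg
        ((hessForm (LagR D xb yb Mb) (xb, yb)).toQuadraticMap.restrict (tangentR D xb yb)) := rfl
  have hW := finrank_le_finrank_inf_perp_add_card (W k) ex
    (a01 xb yb \ Hact (t k) (X k) (Y k))
  rw [h.nondeg.1.TIndex_eq_sigNeg, QIdx_eq_sigNeg]
  have := hWrank k
  omega

end ConvergingKKT

end IndexBounds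

theorem statement14_general {n : ℕ} {P Q κ : Type*} [Fintype P] [Fintype Q]
    (D : Setting n P Q) (l : Filter κ) (t : κ → ℝ) (htpos : ∀ k, 0 < t k)
    (X Y : κ → Vec n) (Mk : κ → SMult n P Q)
    (hK : ∀ k, KKTAt D (t k) (X k) (Y k) (Mk k)) (xb yb : Vec n)
    (hconv : Tendsto (fun k => ((X k, Y k) : Vec n × Vec n)) l (𝓝 (xb, yb)))
    (Mb : TMult n P Q) (hnd : NondegTStatAt D xb yb Mb) :
    ∀ᶠ k in l,
      QIdx D (t k) (X k) (Y k) (Mk k) - #((a01 xb yb).filter fun i => Mb.sig1 i = 0) ≤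
        TIndex D xb yb Mb ∧
      TIndex D xb yb Mb ≤ QIdx D (t k) (X k) (Y k) (Mk k) := by
  refine Filter.mem_iff_ultrafilter.mpr fun u hu => ?_
  have h : ConvergingKKT D u t X Y Mk xb yb Mb :=
    ⟨htpos, hK, (continuous_fst.tendsto _).comp (hconv.mono_left hu),
      (continuous_snd.tendsto _).comp (hconv.mono_left hu), hnd⟩
  exact (h.eventually_QIdx_le.mono fun k hk => Nat.sub_le_iff_le_add.mpr hk).and
    h.eventually_TIndex_le

/-- Theorem 3: if nondegenerate KKT points of S(t_k) with
quadratic index m converge to a nondegenerate T-stationary point of R with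
T-index TI, then max{m − |{i ∈ a01 : σ̄₁ᵢ = 0}|, 0} ≤ TI ≤ m (with truncated
natural subtraction realizing the max with 0). -/
theorem statement14 {n : ℕ} {P Q : Type*} [Fintype P] [Fintype Q]
    (D : Setting n P Q) (t : ℕ → ℝ) (htpos : ∀ k, 0 < t k)
    (ht0 : Filter.Tendsto t Filter.atTop (nhds 0))
    (X Y : ℕ → Vec n) (Mk : ℕ → SMult n P Q)
    (hK : ∀ k, NondegKKTAt D (t k) (X k) (Y k) (Mk k))
    (m : ℕ) (hQI : ∀ k, QIdx D (t k) (X k) (Y k) (Mk k) = m)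
    (xb yb : Vec n)
    (hconv : Filter.Tendsto (fun k => ((X k, Y k) : Vec n × Vec n))
      Filter.atTop (nhds (xb, yb)))
    (Mb : TMult n P Q) (hnd : NondegTStatAt D xb yb Mb) :
    m - ((a01 xb yb).filter fun i => Mb.sig1 i = 0).card ≤ TIndex D xb yb Mb ∧
    TIndex D xb yb Mb ≤ m := by
  obtain ⟨k, hk⟩ :=
    (statement14_general D atTop t htpos X Y Mk (fun k => (hK k).1) xb yb hconv Mb hnd).exists
  rwa [hQI] at hk

end Scholtes
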